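/- arXiv:1605.01024 — 6 statements merged into one kernel-verified Lean document; each statement's English description precedes it below -/
import Mathlib

section
/- Every semifilter on ω, regarded as a subspace of the Cantor space 2^ω, is homogeneous. -/
open Set

abbrev Cantor := ℕ → Bool

def UpwardClosed (S : Set Cantor) : Prop :=
  ∀ x ∈ S, ∀ y : Cantor, (∀ n, x n = true → y n = true) → y ∈ S

def DownwardClosed (R : Set Cantor) : Prop :=
  ∀ y ∈ R, ∀ x : Cantor, (∀ n, x n = true → y n = true) → x ∈ R

def ClosedUnderFinMod (S : Set Cantor) : Prop :=
  ∀ x ∈ S, ∀ y : Cantor, {n | x n ≠ y n}.Finite → y ∈ S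

def IsSemifilter (S : Set Cantor) : Prop :=
  (fun _ => false) ∉ S ∧ (fun _ => true) ∈ S ∧ UpwardClosed S ∧ ClosedUnderFinMod S

def IsSemiideal (R : Set Cantor) : Prop :=
  (fun _ => false) ∈ R ∧ (fun _ => true) ∉ R ∧ DownwardClosed R ∧ ClosedUnderFinMod R

def ClosedUnderInter (S : Set Cantor) : Prop :=
  ∀ x ∈ S, ∀ y ∈ S, (fun n => x n && y n) ∈ S

def IsFilterOnOmega (F : Set Cantor) : Prop := IsSemifilter F ∧ ClosedUnderInter F

def IsHomogeneous (X : Type*) [TopologicalSpace X] : Prop :=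
  ∀ x y : X, ∃ h : X ≃ₜ X, h x = y

def IsFsigma (A : Set Cantor) : Prop :=
  ∃ F : ℕ → Set Cantor, (∀ n, IsClosed (F n)) ∧ A = ⋃ n, F n

def DOmegaSigmaTwo (X : Set Cantor) : Prop :=
  ∃ A : ℕ → Set Cantor, (∀ n, IsFsigma (A n)) ∧ Monotone A ∧
    X = ⋃ n ∈ {n : ℕ | Odd n}, (A n \ ⋃ m < n, A m)

def InDelta (X : Set Cantor) : Prop := DOmegaSigmaTwo X ∧ DOmegaSigmaTwo Xᶜ

def WadgeLe (A B : Set Cantor) : Prop :=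
  ∃ f : Cantor → Cantor, Continuous f ∧ A = f ⁻¹' B

def WadgeEquiv (A B : Set Cantor) : Prop := WadgeLe A B ∧ WadgeLe B A

def CompletelyMetrizable (X : Type*) [t : TopologicalSpace X] : Prop :=
  ∃ m : MetricSpace X, m.toUniformSpace.toTopologicalSpace = t ∧
    @CompleteSpace X m.toUniformSpace

def FirstCategory (X : Type*) [TopologicalSpace X] : Prop :=
  ∃ f : ℕ → Set X, (∀ n, interior (closure (f n)) = ∅) ∧ (Set.univ : Set X) = ⋃ n, f n

def CantorFin : Set Cantor := {x | {n | x n = true}.Finite}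

def BorelSet (X : Set Cantor) : Prop := @MeasurableSet Cantor (borel Cantor) X

/-!
Fix `x` and `y`. Exchanging the values `x n` and `y n` in coordinate `n` of a sequence `z`, for
every `n` up to the first place where `z` departs from `x`, and keeping the rest of `z`, is a
homeomorphism of the whole product that maps `x` to `y`. It changes only finitely many coordinates
of any `z ≠ x`, so it maps a set containing `x` and `y` and closed under finite modifications onto
itself.
-/

section BranchSwap

open PiNat Equiv

variable {α : ℕ → Type*}

open scoped Classical in
/-- The map of sequences `z` that moves `x` to `y`: it exchanges the values `x n` and `y n` in
coordinate `n` as long as `z` agrees with `x` strictly below `n`, and keeps `z n` from then on.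
The first coordinate where `z` and `x` differ is still subject to the exchange, since `z` may take
the value `y n` there. -/
noncomputable def branchSwap (x y z : ∀ n, α n) : ∀ n, α n := fun n =>
  if z ∈ cylinder x n then swap (x n) (y n) (z n) else z n

open scoped Classical in
theorem branchSwap_apply_of_mem {x z : ∀ n, α n} {n : ℕ} (h : z ∈ cylinder x n) (y : ∀ n, α n) :
    branchSwap x y z n = swap (x n) (y n) (z n) :=
  if_pos h

theorem branchSwap_apply_of_notMem {x z : ∀ n, α n} {n : ℕ} (h : z ∉ cylinder x n)
    (y : ∀ n, α n) : branchSwap x y z n = z n :=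
  if_neg h

theorem branchSwap_left (x y : ∀ n, α n) : branchSwap x y x = y := by
  classical
  funext n
  rw [branchSwap_apply_of_mem (self_mem_cylinder x n), swap_apply_left]

theorem branchSwap_mem_cylinder_iff (x y z : ∀ n, α n) (n : ℕ) :
    branchSwap x y z ∈ cylinder y n ↔ z ∈ cylinder x n := by
  classical
  induction n with
  | zero => simp only [cylinder_zero, mem_univ]
  | succ n ih =>
    simp only [mem_cylinder_iff, Nat.forall_lt_succ_right] at ih ⊢
    rw [ih]
    refine and_congr_right fun hz => ?_
    rw [branchSwap_apply_of_mem hz, swap_apply_eq_iff, swap_apply_right]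

theorem branchSwap_branchSwap (x y z : ∀ n, α n) : branchSwap y x (branchSwap x y z) = z := by
  classical
  funext n
  by_cases hz : z ∈ cylinder x n
  · rw [branchSwap_apply_of_mem ((branchSwap_mem_cylinder_iff x y z n).2 hz),
      branchSwap_apply_of_mem hz, swap_comm, swap_apply_self]
  · rw [branchSwap_apply_of_notMem (mt (branchSwap_mem_cylinder_iff x y z n).1 hz),
      branchSwap_apply_of_notMem hz]

theorem finite_setOf_ne_branchSwap {x z : ∀ n, α n} (hz : z ≠ x) (y : ∀ n, α n) :
    {n | z n ≠ branchSwap x y z n}.Finite := by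
  refine (finite_Iic (firstDiff z x)).subset fun n hn => ?_
  by_contra hlt
  have hcylinder : z ∉ cylinder x n := mt (mem_cylinder_iff_le_firstDiff hz n).1 hlt
  exact hn (branchSwap_apply_of_notMem hcylinder y).symm

theorem branchSwap_mem {S : Set (∀ n, α n)}
    (hS : ∀ x ∈ S, ∀ y, {n | x n ≠ y n}.Finite → y ∈ S) (x : ∀ n, α n) {y z : ∀ n, α n}
    (hy : y ∈ S) (hz : z ∈ S) : branchSwap x y z ∈ S := by
  rcases eq_or_ne z x with rfl | hne
  · rwa [branchSwap_left]
  · exact hS z hz _ (finite_setOf_ne_branchSwap hne y)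

variable [∀ n, TopologicalSpace (α n)] [∀ n, DiscreteTopology (α n)]

theorem isClopen_cylinder (x : ∀ n, α n) (n : ℕ) : IsClopen (cylinder x n) := by
  refine ⟨?_, isOpen_cylinder α x n⟩
  rw [cylinder_eq_pi]
  exact isClosed_set_pi fun _ _ => isClosed_discrete _

theorem continuous_branchSwap (x y : ∀ n, α n) : Continuous (branchSwap x y) := by
  classical
  refine continuous_pi fun n => Continuous.if ?_ ?_ (continuous_apply n)
  · intro z hz
    have hfrontier : frontier (cylinder x n) = ∅ := (isClopen_cylinder x n).frontier_eq
    exact absurd hz (hfrontier ▸ notMem_empty z)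
  · exact continuous_of_discreteTopology.comp (continuous_apply n)

/-- `branchSwap x y` as a self-homeomorphism of the product, with inverse `branchSwap y x`. -/
noncomputable def branchSwapHomeomorph (x y : ∀ n, α n) : (∀ n, α n) ≃ₜ (∀ n, α n) where
  toFun := branchSwap x y
  invFun := branchSwap y x
  left_inv := branchSwap_branchSwap x y
  right_inv := branchSwap_branchSwap y x
  continuous_toFun := continuous_branchSwap x y
  continuous_invFun := continuous_branchSwap y x

theorem semifilter_homogeneous_general (S : Set (∀ n, α n))
    (hS : ∀ x ∈ S, ∀ y, {n | x n ≠ y n}.Finite → y ∈ S) : IsHomogeneous S := by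
  rintro ⟨x, hx⟩ ⟨y, hy⟩
  have mem_iff (z) : z ∈ S ↔ branchSwapHomeomorph x y z ∈ S := by
    refine ⟨branchSwap_mem hS x hy, fun hz => ?_⟩
    rw [← branchSwap_branchSwap x y z]
    exact branchSwap_mem hS y hx hz
  exact ⟨(branchSwapHomeomorph x y).subtype mem_iff, Subtype.ext (branchSwap_left x y)⟩

end BranchSwap

/-- Every semifilter is homogeneous. -/
theorem semifilter_homogeneous (S : Set Cantor) (hS : IsSemifilter S) :
    IsHomogeneous S :=
  semifilter_homogeneous_general S hS.2.2.2
end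

section
/- Every Borel semifilter on ω, regarded as a subspace of the Cantor space 2^ω, is strongly homogeneous, i.e., every nonempty clopen subspace of it is homeomorphic to it. -/
open Set

/-!
By the zero-one law, a null measurable set `S` closed under finite modifications is null or conull,
so membership in `S` is constant on a closed set `K` of nearly full measure. Given nonempty clopen
sets `A` and `B`, a back-and-forth construction matches smaller and smaller clopen pieces of `A` and
`B`. The part of a piece outside `K` is small enough to be sent into the part of the other piece
inside `K`; clopen sets of equal measure can be matched by finite modifications, which respect `S`.
In the limit a pair of points either is matched by such a modification or lies in `K × K`, so
`(A, A ∩ S)` and `(B, B ∩ S)` are homeomorphic pairs.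

A clopen subset of the subspace `S` is only the trace of an open set `O`. If `p` is a point outside
`S`, then `S` and `S ∩ O` are unchanged when `p` is removed from the ambient sets, and an open set
which is not compact is a disjoint union of infinitely many nonempty clopen sets, to be matched one
by one.
-/

open Topology MeasureTheory Function Filter

section HomeomorphicRel

variable {X : Type*} [TopologicalSpace X] {S V U : Set X}

/-- A disjoint union of open sets is the topological sum of its members. -/
noncomputable def homeomorphSigmaOfDisjoint {ι : Type*} {D : ι → Set X}
    (hD : Pairwise (Disjoint on D)) (hDo : ∀ i, IsOpen (D i)) : (Σ i, D i) ≃ₜ ↥(⋃ i, D i) :=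
  (unionEqSigmaOfDisjoint hD).symm.toHomeomorphOfContinuousOpen
    (continuous_sigma fun i ↦ continuous_inclusion (subset_iUnion D i))
    (isOpenMap_sigma.2 fun i ↦ (hDo i).isOpenMap_inclusion (subset_iUnion D i))

/-- The subspaces `V` and `U` are homeomorphic as pairs `(V, V ∩ S)` and `(U, U ∩ S)`. -/
def HomeomorphicRel (S V U : Set X) : Prop :=
  ∃ h : V ≃ₜ U, ∀ x : V, (x : X) ∈ S ↔ (h x : X) ∈ S

namespace HomeomorphicRel

theorem nonempty_homeomorph_preimage_val (h : HomeomorphicRel S V U) :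
    Nonempty ((Subtype.val ⁻¹' V : Set S) ≃ₜ (Subtype.val ⁻¹' U : Set S)) := by
  obtain ⟨f, hf⟩ := h
  let e (T : Set X) : (Subtype.val ⁻¹' T : Set S) ≃ₜ (Subtype.val ⁻¹' S : Set T) :=
    { toFun x := ⟨⟨x, x.2⟩, x.1.2⟩
      invFun x := ⟨⟨x, x.2⟩, x.1.2⟩ }
  have hfS : (Subtype.val ⁻¹' S : Set V) = f ⁻¹' (Subtype.val ⁻¹' S) := Set.ext hf
  exact ⟨((e V).trans (f.sets hfS)).trans (e U).symm⟩

theorem iUnion {ι : Type*} {D E : ι → Set X} (hD : Pairwise (Disjoint on D))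
    (hE : Pairwise (Disjoint on E)) (hDo : ∀ i, IsOpen (D i)) (hEo : ∀ i, IsOpen (E i))
    (h : ∀ i, HomeomorphicRel S (D i) (E i)) : HomeomorphicRel S (⋃ i, D i) (⋃ i, E i) := by
  choose f hf using h
  let g : (Σ i, D i) ≃ₜ Σ i, E i :=
    { Equiv.sigmaCongrRight fun i ↦ (f i).toEquiv with
      continuous_toFun := continuous_sigma fun i ↦ continuous_sigmaMk.comp (f i).continuous
      continuous_invFun := continuous_sigma fun i ↦ continuous_sigmaMk.comp (f i).symm.continuous }
  let eD := homeomorphSigmaOfDisjoint hD hDo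
  refine ⟨(eD.symm.trans g).trans (homeomorphSigmaOfDisjoint hE hEo), fun x ↦ ?_⟩
  obtain ⟨⟨i, x⟩, rfl⟩ := eD.surjective x
  simp only [Homeomorph.trans_apply, Homeomorph.symm_apply_apply]
  exact hf i x

theorem of_isCompact [T2Space X] {G : Set (X × X)} (hG : IsCompact G) (hV : BijOn Prod.fst G V)
    (hU : BijOn Prod.snd G U) (hS : ∀ p ∈ G, p.1 ∈ S ↔ p.2 ∈ S) : HomeomorphicRel S V U := by
  have : CompactSpace G := isCompact_iff_compactSpace.1 hG
  have e {T : Set X} {π : X × X → X} (hπ : Continuous π) (hT : BijOn π G T) :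
      ∃ e : G ≃ₜ T, ∀ p : G, (e p : X) = π p :=
    ⟨Continuous.homeoOfEquivCompactToT2 (f := hT.equiv π)
      ((hπ.comp continuous_subtype_val).subtype_mk _), fun _ ↦ rfl⟩
  obtain ⟨eV, heV⟩ := e continuous_fst hV
  obtain ⟨eU, heU⟩ := e continuous_snd hU
  refine ⟨eV.symm.trans eU, fun x ↦ ?_⟩
  obtain ⟨p, rfl⟩ := eV.surjective x
  simpa [heV, heU] using hS p p.2

end HomeomorphicRel
end HomeomorphicRel

/-! ### Haar measure and finite modifications -/

theorem ClosedUnderFinMod.mem_iff {S : Set Cantor} (hS : ClosedUnderFinMod S) {x y : Cantor}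
    (h : x =ᶠ[cofinite] y) : x ∈ S ↔ y ∈ S :=
  ⟨fun hx ↦ hS x hx y h, fun hy ↦ hS y hy x h.symm⟩

theorem ClosedUnderFinMod.add_mem_iff {S : Set Cantor} (hS : ClosedUnderFinMod S) {t : Cantor}
    (ht : t =ᶠ[cofinite] 0) (x : Cantor) : x + t ∈ S ↔ x ∈ S :=
  hS.mem_iff (by simpa using (EventuallyEq.refl _ x).add ht)

namespace Cantor

/-- The word formed by the first `M` bits of a point; the preimages of words are the basic clopen
sets of rank `M`. -/
def bits (M : ℕ) (x : Cantor) : Fin M → Bool := fun i ↦ x i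

theorem continuous_bits (M : ℕ) : Continuous (bits M) :=
  continuous_pi fun i ↦ continuous_apply (i : ℕ)

theorem isClopen_bits_preimage {M : ℕ} (F : Set (Fin M → Bool)) : IsClopen (bits M ⁻¹' F) :=
  (isClopen_discrete F).preimage (continuous_bits M)

theorem bits_eq_bits_iff {M : ℕ} {x y : Cantor} : bits M x = bits M y ↔ ∀ i < M, x i = y i :=
  ⟨fun h i hi ↦ congrFun h ⟨i, hi⟩, fun h ↦ funext fun i ↦ h i i.2⟩

theorem exists_bits_eq_eventuallyEq {M : ℕ} (w : Fin M → Bool) (x : Cantor) :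
    ∃ y : Cantor, bits M y = w ∧ y =ᶠ[cofinite] x := by
  refine ⟨fun n ↦ if h : n < M then w ⟨n, h⟩ else x n, by ext i; simp [bits], ?_⟩
  rw [Nat.cofinite_eq_atTop]
  filter_upwards [eventually_ge_atTop M] with n hn
  exact dif_neg hn.not_gt

theorem exists_bits_preimage_subset {V : Set Cantor} (hV : IsOpen V) {x : Cantor} (hx : x ∈ V) :
    ∃ M, bits M ⁻¹' {bits M x} ⊆ V := by
  obtain ⟨M, h⟩ : ∃ n, PiNat.cylinder x n ⊆ V := by
    obtain ⟨_, ⟨y, n, rfl⟩, hxy, h⟩ :=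
      (PiNat.isTopologicalBasis_cylinders fun _ : ℕ ↦ Bool).exists_subset_of_mem_open hx hV
    exact ⟨n, PiNat.mem_cylinder_iff_eq.1 hxy ▸ h⟩
  exact ⟨M, fun y hy ↦ h (PiNat.mem_cylinder_iff.2 (bits_eq_bits_iff.1 hy))⟩

theorem dense_setOf_eventuallyEq (x : Cantor) : Dense {y : Cantor | y =ᶠ[cofinite] x} := by
  refine dense_iff_inter_open.2 fun O hO ⟨z, hz⟩ ↦ ?_
  obtain ⟨M, hM⟩ := exists_bits_preimage_subset hO hz
  obtain ⟨y, hy, hyx⟩ := exists_bits_eq_eventuallyEq (bits M z) x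
  exact ⟨y, hM hy, hyx⟩

theorem eventually_exists_eq_bits_preimage {V : Set Cantor} (hV : IsClopen V) :
    ∀ᶠ M in atTop, ∃ F : Finset (Fin M → Bool), V = bits M ⁻¹' F := by
  choose! N hN using fun x (hx : x ∈ V) ↦ exists_bits_preimage_subset hV.isOpen hx
  obtain ⟨t, htV, ht⟩ := hV.isClosed.isCompact.elim_nhds_subcover
    (fun x ↦ bits (N x) ⁻¹' {bits (N x) x})
    fun x _ ↦ (isClopen_bits_preimage _).isOpen.mem_nhds rfl
  filter_upwards [eventually_ge_atTop (t.sup N)] with M hM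
  refine ⟨(toFinite (bits M '' V)).toFinset, ?_⟩
  rw [Finite.coe_toFinset]
  refine (subset_preimage_image _ V).antisymm ?_
  rintro y ⟨x, hx, hxy⟩
  obtain ⟨z, hz, hxz⟩ := mem_iUnion₂.1 (ht hx)
  refine hN z (htV z hz) (bits_eq_bits_iff.2 fun i hi ↦ ?_)
  rw [← bits_eq_bits_iff.1 hxy i (hi.trans_le ((Finset.le_sup hz).trans hM))]
  exact bits_eq_bits_iff.1 hxz i hi

/-- The normalized Haar measure, i.e. the product of the uniform measures on `Bool`. Bits are added
modulo `2`, through the Boolean ring structure of `Bool`. -/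
noncomputable def mu : Measure Cantor := Measure.addHaarMeasure ⊤

instance : mu.IsAddHaarMeasure := by unfold mu; infer_instance

instance : mu.Regular := by unfold mu; infer_instance

instance : IsProbabilityMeasure mu := ⟨by unfold mu; exact Measure.addHaarMeasure_self⟩

theorem bits_add (M : ℕ) (x y : Cantor) : bits M (x + y) = bits M x + bits M y := rfl

theorem exists_bits_preimage_eq_preimage_add {M : ℕ} (v w : Fin M → Bool) :
    ∃ t : Cantor, t =ᶠ[cofinite] 0 ∧ bits M ⁻¹' {v} = (· + t) ⁻¹' (bits M ⁻¹' {w}) := by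
  obtain ⟨t, ht, ht0⟩ := exists_bits_eq_eventuallyEq (w - v) 0
  refine ⟨t, ht0, ?_⟩
  ext x
  simp only [mem_preimage, mem_singleton_iff, bits_add, ht]
  rw [← eq_sub_iff_add_eq, sub_sub_cancel]

theorem measureReal_bits_preimage {M : ℕ} (F : Finset (Fin M → Bool)) :
    mu.real (bits M ⁻¹' F) = F.card / 2 ^ M := by
  set c := mu.real (bits M ⁻¹' {0})
  have hword (w : Fin M → Bool) : mu.real (bits M ⁻¹' {w}) = c := by
    obtain ⟨t, -, h⟩ := exists_bits_preimage_eq_preimage_add w 0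
    rw [h, measureReal_def, measure_preimage_add_right, ← measureReal_def]
  have hF (F : Finset (Fin M → Bool)) : mu.real (bits M ⁻¹' F) = F.card * c := by
    rw [← biUnion_preimage_singleton, Finset.set_biUnion_coe, measureReal_biUnion_finset]
    · simp [hword]
    · exact fun v _ w _ hvw ↦ (disjoint_singleton.2 hvw).preimage _
    · exact fun w _ ↦ (isClopen_bits_preimage _).isOpen.measurableSet
  have hc : 1 = 2 ^ M * c := by simpa using hF Finset.univ
  rw [hF, eq_div_iff (by positivity), mul_assoc, mul_comm c, ← hc, mul_one]

theorem exists_isClopen_subset_measureReal_mem_Ioo {B : Set Cantor} (hB : IsClopen B) {r s : ℝ}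
    (hrs : r < s) (hr : r < mu.real B) (hs : 0 < s) :
    ∃ C ⊆ B, IsClopen C ∧ mu.real C ∈ Ioo r s := by
  rcases lt_or_ge r 0 with hr0 | hr0
  · exact ⟨∅, empty_subset B, isClopen_empty, by simpa using ⟨hr0, hs⟩⟩
  have hlim : ∀ᶠ M : ℕ in atTop, (1 / 2 : ℝ) ^ M < s - r :=
    (tendsto_pow_atTop_nhds_zero_of_lt_one (by norm_num) (by norm_num)).eventually_lt_const
      (sub_pos.2 hrs)
  obtain ⟨M, ⟨F, rfl⟩, hM⟩ := ((eventually_exists_eq_bits_preimage hB).and hlim).exists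
  have h2 : (0 : ℝ) < 2 ^ M := by positivity
  rw [one_div, inv_pow] at hM
  rw [measureReal_bits_preimage, lt_div_iff₀ h2] at hr
  obtain ⟨G, hGF, hG⟩ := Finset.exists_subset_card_eq
    (Nat.succ_le_of_lt ((Nat.floor_lt (by positivity)).2 hr))
  refine ⟨bits M ⁻¹' G, preimage_mono (Finset.coe_subset.2 hGF), isClopen_bits_preimage _, ?_⟩
  rw [measureReal_bits_preimage, hG, Nat.cast_succ]
  refine ⟨(lt_div_iff₀ h2).2 (Nat.lt_floor_add_one _), ?_⟩
  calc (⌊r * 2 ^ M⌋₊ + 1 : ℝ) / 2 ^ M ≤ (r * 2 ^ M + 1) / 2 ^ M := by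
        gcongr; exact Nat.floor_le (by positivity)
    _ = r + (2 ^ M)⁻¹ := by field_simp
    _ < s := by linarith

theorem homeomorphicRel_bits_preimage {S : Set Cantor} (hS : ClosedUnderFinMod S) {M : ℕ}
    {F G : Finset (Fin M → Bool)} (h : F.card = G.card) :
    HomeomorphicRel S (bits M ⁻¹' F) (bits M ⁻¹' G) := by
  have hcell (v w : Fin M → Bool) : HomeomorphicRel S (bits M ⁻¹' {v}) (bits M ⁻¹' {w}) := by
    obtain ⟨t, ht, hvw⟩ := exists_bits_preimage_eq_preimage_add v w
    exact ⟨(Homeomorph.addRight t).sets hvw, fun x ↦ (hS.add_mem_iff ht x).symm⟩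
  have hdisj {ι : Type} {f : ι → Fin M → Bool} (hf : Injective f) :
      Pairwise (Disjoint on fun i ↦ bits M ⁻¹' {f i}) :=
    fun i j hij ↦ (disjoint_singleton.2 (hf.ne hij)).preimage _
  let e := Finset.equivOfCardEq h
  have hF : bits M ⁻¹' F = ⋃ v : F, bits M ⁻¹' {(v : Fin M → Bool)} := by ext; simp
  have hG : bits M ⁻¹' G = ⋃ v : F, bits M ⁻¹' {(e v : Fin M → Bool)} := by
    rw [e.surjective.iUnion_comp fun w : G ↦ bits M ⁻¹' {(w : Fin M → Bool)}]; ext; simp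
  rw [hF, hG]
  exact .iUnion (hdisj Subtype.val_injective) (hdisj (Subtype.val_injective.comp e.injective))
    (fun _ ↦ (isClopen_bits_preimage _).isOpen) (fun _ ↦ (isClopen_bits_preimage _).isOpen)
    fun v ↦ hcell v (e v)

theorem exists_isClopen_subset_homeomorphicRel {S : Set Cantor} (hS : ClosedUnderFinMod S)
    {A B : Set Cantor} (hA : IsClopen A) (hB : IsClopen B) (h : mu.real A ≤ mu.real B) :
    ∃ C ⊆ B, IsClopen C ∧ mu.real C = mu.real A ∧ HomeomorphicRel S A C := by
  obtain ⟨M, ⟨F, rfl⟩, ⟨G, rfl⟩⟩ := ((eventually_exists_eq_bits_preimage hA).and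
    (eventually_exists_eq_bits_preimage hB)).exists
  simp only [measureReal_bits_preimage] at h ⊢
  have hcard : F.card ≤ G.card := by
    exact_mod_cast (div_le_div_iff_of_pos_right (by positivity : (0 : ℝ) < 2 ^ M)).1 h
  obtain ⟨G', hG', hc⟩ := Finset.exists_subset_card_eq hcard
  exact ⟨bits M ⁻¹' G', preimage_mono (Finset.coe_subset.2 hG'), isClopen_bits_preimage _,
    by rw [measureReal_bits_preimage, hc], homeomorphicRel_bits_preimage hS hc.symm⟩

theorem eventuallyConst_of_closedUnderFinMod {S : Set Cantor} (hm : NullMeasurableSet S mu)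
    (hS : ClosedUnderFinMod S) : EventuallyConst S (ae mu) := by
  refine aeconst_of_dense_setOfPred_preimage_vadd_eq (M := Cantor) hm ?_
  refine (dense_setOf_eventuallyEq 0).mono fun t ht ↦ ?_
  ext x
  rw [mem_preimage, vadd_eq_add, add_comm]
  exact hS.add_mem_iff ht x

theorem exists_isClosed_forall_mem_iff {S : Set Cantor} (hm : NullMeasurableSet S mu)
    (hS : ClosedUnderFinMod S) {ε : ℝ} (hε : 0 < ε) :
    ∃ K, IsClosed K ∧ mu.real Kᶜ < ε ∧ ∀ x ∈ K, ∀ y ∈ K, x ∈ S ↔ y ∈ S := by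
  obtain ⟨T, hT, hTS⟩ : ∃ T ∈ ae mu, ∀ x ∈ T, ∀ y ∈ T, x ∈ S ↔ y ∈ S := by
    rcases eventuallyConst_set.1 (eventuallyConst_of_closedUnderFinMod hm hS) with h | h
    · exact ⟨_, h, fun x hx y hy ↦ iff_of_true hx hy⟩
    · exact ⟨_, h, fun x hx y hy ↦ iff_of_false hx hy⟩
  obtain ⟨O, hTO, hO, hOε⟩ := Tᶜ.exists_isOpen_lt_of_lt (ENNReal.ofReal ε)
    (by rw [mem_ae_iff.1 hT]; exact ENNReal.ofReal_pos.2 hε)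
  have hOT : Oᶜ ⊆ T := compl_subset_comm.1 hTO
  refine ⟨Oᶜ, hO.isClosed_compl, ?_, fun x hx y hy ↦ hTS x (hOT hx) y (hOT hy)⟩
  rw [compl_compl]
  exact ENNReal.toReal_lt_of_lt_ofReal hOε

theorem exists_isClopen_superset_measureReal_sdiff_lt {K : Set Cantor} (hK : IsClosed K) {ε : ℝ}
    (hε : 0 < ε) : ∃ C, IsClopen C ∧ K ⊆ C ∧ mu.real (C \ K) < ε := by
  obtain ⟨O, hKO, hO, -, hOε⟩ := hK.measurableSet.exists_isOpen_sdiff_lt (measure_ne_top mu K)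
    (ENNReal.ofReal_pos.2 hε).ne'
  obtain ⟨C, hC, hKC, hCO⟩ := exists_clopen_of_closed_subset_open hK hO hKO
  refine ⟨C, hC, hKC, ENNReal.toReal_lt_of_lt_ofReal (hOε.trans_le' ?_)⟩
  gcongr

/-! ### Splitting balanced pairs -/

section Balanced

variable {S K A B D : Set Cantor}

/-- The part of either set outside `K` is smaller than the part of the other set inside `K`, so
that there is room to send it there. -/
def Balanced (K A B : Set Cantor) : Prop :=
  mu.real (A \ K) < mu.real (B ∩ K) ∧ mu.real (B \ K) < mu.real (A ∩ K)

/-- The relation between clopen sets maintained by the back-and-forth construction: either it can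
be continued, or it has already been completed. -/
def Linked (S K A B : Set Cantor) : Prop := Balanced K A B ∨ HomeomorphicRel S A B

theorem Balanced.symm (h : Balanced K A B) : Balanced K B A := And.symm h

theorem Balanced.nonempty_left (h : Balanced K A B) : (A ∩ K).Nonempty :=
  nonempty_of_measureReal_ne_zero (measureReal_nonneg.trans_lt h.2).ne'

theorem Balanced.nonempty_right (h : Balanced K A B) : (B ∩ K).Nonempty := h.symm.nonempty_left

theorem measureReal_split (hD : IsClopen D) (hDB : D ⊆ B) (K : Set Cantor) :
    mu.real (D ∩ K) + mu.real ((B \ D) ∩ K) = mu.real (B ∩ K) ∧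
      mu.real (D \ K) + mu.real ((B \ D) \ K) = mu.real (B \ K) := by
  have h (T : Set Cantor) : mu.real (D ∩ T) + mu.real ((B \ D) ∩ T) = mu.real (B ∩ T) := by
    rw [← measureReal_inter_add_sdiff (s := B ∩ T) hD.isOpen.measurableSet, inter_right_comm,
      inter_eq_self_of_subset_right hDB, sdiff_inter_right_comm]
  exact ⟨h K, h Kᶜ⟩

theorem Balanced.exists_homeomorphicRel_split (hS : ClosedUnderFinMod S) (hK : IsClosed K)
    (hB : IsClopen B) (h : Balanced K A B) (hD : IsClopen D) (hDA : D ⊆ A)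
    (h0 : mu.real (D ∩ K) = 0) :
    ∃ C ⊆ B, IsClopen C ∧ HomeomorphicRel S D C ∧ Balanced K (A \ D) (B \ C) := by
  have hDm := measureReal_inter_add_sdiff (μ := mu) (s := D) hK.measurableSet
  have hBm := measureReal_inter_add_sdiff (μ := mu) (s := B) hK.measurableSet
  obtain ⟨hAK, hAK'⟩ := measureReal_split hD hDA K
  obtain ⟨hlt, hlt'⟩ := h
  have hpos (T : Set Cantor) : 0 ≤ mu.real T := measureReal_nonneg
  obtain ⟨C, hCB, hC, hCm, hDC⟩ := exists_isClopen_subset_homeomorphicRel hS hD hB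
    (by linarith [hpos ((A \ D) \ K), hpos (B \ K)])
  have hCK := measureReal_inter_add_sdiff (μ := mu) (s := C) hK.measurableSet
  obtain ⟨hBK, hBK'⟩ := measureReal_split hC hCB K
  exact ⟨C, hCB, hC, hDC, by linarith [hpos (C \ K)], by linarith [hpos (C \ K)]⟩

theorem exists_isClopen_subset_measureReal_inter_sdiff_mem_Ioo (hK : IsClosed K) (hB : IsClopen B)
    {r s r' s' : ℝ} (hrs : r < s) (hr : r < mu.real (B ∩ K)) (hs : 0 < s)
    (hrs' : r' < s') (hr' : r' < mu.real (B \ K)) (hs' : 0 < s') :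
    ∃ C ⊆ B, IsClopen C ∧ mu.real (C ∩ K) ∈ Ioo r s ∧ mu.real (C \ K) ∈ Ioo r' s' := by
  obtain ⟨ε, hε, hεlt⟩ : ∃ ε > 0, ε < min (min (s - r) (mu.real (B ∩ K) - r))
      (min (min (s' - r') (mu.real (B \ K) - r')) s') := by
    apply exists_between
    simp only [lt_min_iff, sub_pos]
    exact ⟨⟨hrs, hr⟩, ⟨hrs', hr'⟩, hs'⟩
  simp only [lt_min_iff] at hεlt
  obtain ⟨⟨hε₁, hε₂⟩, ⟨hε₃, hε₄⟩, hε₅⟩ := hεlt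
  obtain ⟨L, hL, hKL, hLK⟩ := exists_isClopen_superset_measureReal_sdiff_lt hK hε
  have hmono {T T' : Set Cantor} (h : T ⊆ T') : mu.real T ≤ mu.real T' := measureReal_mono h
  have hlt {T T' : Set Cantor} (h : T ⊆ T' ∪ L \ K) : mu.real T < mu.real T' + ε :=
    ((hmono h).trans (measureReal_union_le _ _)).trans_lt (by gcongr)
  have hBL : mu.real (B ∩ K) ≤ mu.real (B ∩ L) := hmono (by gcongr)
  have hBL' : mu.real (B \ K) < mu.real (B \ L) + ε := hlt (by grind)
  obtain ⟨X, hXB, hX, hrX, hXs⟩ := exists_isClopen_subset_measureReal_mem_Ioo (hB.inter hL)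
    (r := r + ε) (s := s) (by linarith) (by linarith) hs
  obtain ⟨Y, hYB, hY, hrY, hYs⟩ := exists_isClopen_subset_measureReal_mem_Ioo (hB.diff hL)
    (r := r') (s := s' - ε) (by linarith) (by linarith) (by linarith)
  have hXK : mu.real X < mu.real ((X ∪ Y) ∩ K) + ε := hlt (by grind)
  have hXK' : mu.real ((X ∪ Y) ∩ K) ≤ mu.real X := hmono (by grind)
  have hYK : mu.real ((X ∪ Y) \ K) < mu.real Y + ε := hlt (by grind)
  have hYK' : mu.real Y ≤ mu.real ((X ∪ Y) \ K) := hmono (by grind)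
  exact ⟨X ∪ Y, by grind, hX.union hY, ⟨by linarith, by linarith⟩, by linarith, by linarith⟩

theorem Balanced.exists_balanced_split (hK : IsClosed K) (hB : IsClopen B) (h : Balanced K A B)
    (hD : IsClopen D) (hDA : D ⊆ A) (hpos : 0 < mu.real (D ∩ K))
    (hpos' : 0 < mu.real ((A \ D) ∩ K)) :
    ∃ C ⊆ B, IsClopen C ∧ Balanced K D C ∧ Balanced K (A \ D) (B \ C) := by
  obtain ⟨hAK, hAK'⟩ := measureReal_split hD hDA K
  obtain ⟨hlt, hlt'⟩ := h
  have hnonneg (T : Set Cantor) : 0 ≤ mu.real T := measureReal_nonneg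
  obtain ⟨C, hCB, hC, ⟨hr, hs⟩, hr', hs'⟩ :=
    exists_isClopen_subset_measureReal_inter_sdiff_mem_Ioo hK hB
      (r := mu.real (D \ K)) (s := mu.real (B ∩ K) - mu.real ((A \ D) \ K))
      (r' := mu.real (B \ K) - mu.real ((A \ D) ∩ K)) (s' := mu.real (D ∩ K))
      (by linarith) (by linarith [hnonneg ((A \ D) \ K)]) (by linarith [hnonneg (D \ K)])
      (by linarith) (by linarith) hpos
  obtain ⟨hBK, hBK'⟩ := measureReal_split hC hCB K
  exact ⟨C, hCB, hC, ⟨hr, hs'⟩, by linarith, by linarith⟩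

theorem Balanced.exists_linked_split (hS : ClosedUnderFinMod S) (hK : IsClosed K) (hA : IsClopen A)
    (hB : IsClopen B) (h : Balanced K A B) (hD : IsClopen D) (hDA : D ⊆ A) :
    ∃ C ⊆ B, IsClopen C ∧ Linked S K D C ∧ Linked S K (A \ D) (B \ C) := by
  rcases (measureReal_nonneg (μ := mu) (s := D ∩ K)).eq_or_lt with h0 | h0
  · obtain ⟨C, hCB, hC, hDC, hAB⟩ := h.exists_homeomorphicRel_split hS hK hB hD hDA h0.symm
    exact ⟨C, hCB, hC, .inr hDC, .inl hAB⟩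
  rcases (measureReal_nonneg (μ := mu) (s := (A \ D) ∩ K)).eq_or_lt with h1 | h1
  · obtain ⟨C, hCB, hC, hDC, hAB⟩ :=
      h.exists_homeomorphicRel_split hS hK hB (hA.diff hD) sdiff_subset h1.symm
    rw [sdiff_sdiff_cancel_left hDA] at hAB
    refine ⟨B \ C, sdiff_subset, hB.diff hC, .inl hAB, .inr ?_⟩
    rwa [sdiff_sdiff_cancel_left hCB]
  · obtain ⟨C, hCB, hC, hDC, hAB⟩ := h.exists_balanced_split hK hB hD hDA h0 h1
    exact ⟨C, hCB, hC, .inl hDC, .inl hAB⟩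

end Balanced

/-! ### The back-and-forth construction -/

section Matching

variable {S K A B : Set Cantor} {ρ : Set (Cantor × Cantor)}

/-- The finite stages of the back-and-forth construction: a compact relation between `A` and `B`
assembled from boxes over balanced pairs, which remain to be refined, and graphs of homeomorphisms
respecting `S`, which are final. -/
inductive Matching (S K : Set Cantor) : Set Cantor → Set Cantor → Set (Cantor × Cantor) → Prop
  | box {A B : Set Cantor} (hA : IsClopen A) (hB : IsClopen B) (h : Balanced K A B) :
      Matching S K A B (A ×ˢ B)
  | graph {A B : Set Cantor} (hA : IsClosed A) (hB : IsClosed B) (h : A ≃ₜ B)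
      (hS : ∀ x : A, (x : Cantor) ∈ S ↔ (h x : Cantor) ∈ S) :
      Matching S K A B (range fun x : A ↦ ((x : Cantor), (h x : Cantor)))
  | union {A B A' B' : Set Cantor} {ρ ρ' : Set (Cantor × Cantor)} (hA : Disjoint A A')
      (hB : Disjoint B B') (h : Matching S K A B ρ) (h' : Matching S K A' B' ρ') :
      Matching S K (A ∪ A') (B ∪ B') (ρ ∪ ρ')

theorem Linked.exists_matching (h : Linked S K A B) (hA : IsClopen A) (hB : IsClopen B) :
    ∃ ρ, Matching S K A B ρ := by
  rcases h with h | ⟨f, hf⟩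
  · exact ⟨_, .box hA hB h⟩
  · exact ⟨_, .graph hA.isClosed hB.isClosed f hf⟩

namespace Matching

theorem symm (h : Matching S K A B ρ) : Matching S K B A (Prod.swap ⁻¹' ρ) := by
  induction h with
  | box hA hB h => simpa only [preimage_swap_prod] using box hB hA h.symm
  | graph hA hB f hf =>
    convert graph (K := K) hB hA f.symm fun y ↦ by simpa using (hf (f.symm y)).symm
    ext ⟨y, x⟩
    constructor
    · rintro ⟨x, hx⟩
      cases hx
      exact ⟨f x, by simp⟩
    · rintro ⟨y, hy⟩
      cases hy
      exact ⟨f.symm y, by simp⟩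
  | union hA hB _ _ ih ih' => exact union hB hA ih ih'

theorem subset_prod (h : Matching S K A B ρ) : ρ ⊆ A ×ˢ B := by
  induction h with
  | box => exact subset_rfl
  | graph _ _ f => exact range_subset_iff.2 fun x ↦ ⟨x.2, (f x).2⟩
  | union _ _ _ _ ih ih' =>
    exact union_subset (ih.trans (prod_mono subset_union_left subset_union_left))
      (ih'.trans (prod_mono subset_union_right subset_union_right))

theorem isClosed (h : Matching S K A B ρ) : IsClosed ρ := by
  induction h with
  | box hA hB _ => exact hA.isClosed.prod hB.isClosed
  | graph hA _ f =>
    have := isCompact_iff_compactSpace.1 hA.isCompact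
    exact (isCompact_range (by fun_prop)).isClosed
  | union _ _ _ _ ih ih' => exact ih.union ih'

theorem exists_mem (h : Matching S K A B ρ) : ∀ x ∈ A, ∃ y, (x, y) ∈ ρ := by
  induction h with
  | box _ _ h =>
    obtain ⟨y, hy, -⟩ := h.nonempty_right
    exact fun x hx ↦ ⟨y, hx, hy⟩
  | graph _ _ f => exact fun x hx ↦ ⟨f ⟨x, hx⟩, ⟨x, hx⟩, rfl⟩
  | union _ _ _ _ ih ih' =>
    exact fun x hx ↦ hx.elim (fun hx ↦ (ih x hx).imp fun _ ↦ .inl)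
      fun hx ↦ (ih' x hx).imp fun _ ↦ .inr

theorem exists_mem_fiber (h : Matching S K A B ρ) : ∀ p ∈ ρ, ¬ (p.1 ∈ S ↔ p.2 ∈ S) →
    ∃ z ∈ K, (z, p.2) ∈ ρ := by
  induction h with
  | box _ _ h =>
    obtain ⟨z, hz, hzK⟩ := h.nonempty_left
    exact fun p hp _ ↦ ⟨z, hzK, hz, hp.2⟩
  | graph _ _ f hf =>
    rintro _ ⟨x, rfl⟩ hx
    exact absurd (hf x) hx
  | union _ _ _ _ ih ih' =>
    rintro p (hp | hp) hpS
    · exact (ih p hp hpS).imp fun _ ↦ .imp_right .inl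
    · exact (ih' p hp hpS).imp fun _ ↦ .imp_right .inr

theorem exists_refinement_left (hS : ClosedUnderFinMod S) (hK : IsClosed K) {E : Set Cantor}
    (hE : IsClopen E) (h : Matching S K A B ρ) :
    ∃ ρ' ⊆ ρ, Matching S K A B ρ' ∧
      ∀ p ∈ ρ', ∀ q ∈ ρ', p.2 = q.2 → (p.1 ∈ E ↔ q.1 ∈ E) := by
  induction h with
  | @box A B hA hB h =>
    obtain ⟨C, hCB, hC, h₁, h₂⟩ :=
      h.exists_linked_split hS hK hA hB (hA.inter hE) inter_subset_left
    obtain ⟨ρ₁, hρ₁⟩ := h₁.exists_matching (hA.inter hE) hC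
    obtain ⟨ρ₂, hρ₂⟩ := h₂.exists_matching (hA.diff (hA.inter hE)) (hB.diff hC)
    have hρ := union disjoint_sdiff_right disjoint_sdiff_right hρ₁ hρ₂
    rw [union_sdiff_cancel inter_subset_left, union_sdiff_cancel hCB] at hρ
    refine ⟨_, hρ.subset_prod, hρ, fun p hp q hq hpq ↦ ?_⟩
    have key : ∀ p ∈ ρ₁ ∪ ρ₂, (p.1 ∈ E ↔ p.2 ∈ C) := by
      rintro p (hp | hp)
      · exact iff_of_true (hρ₁.subset_prod hp).1.2 (hρ₁.subset_prod hp).2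
      · have := hρ₂.subset_prod hp
        exact iff_of_false (fun hE ↦ this.1.2 ⟨this.1.1, hE⟩) this.2.2
    rw [key p hp, key q hq, hpq]
  | graph hA hB f hf =>
    refine ⟨_, subset_rfl, graph hA hB f hf, ?_⟩
    rintro _ ⟨x, rfl⟩ _ ⟨x', rfl⟩ hxx'
    rw [f.injective (Subtype.ext hxx')]
  | union hA hB _ _ ih ih' =>
    obtain ⟨ρ₁, hsub₁, hρ₁, hE₁⟩ := ih
    obtain ⟨ρ₂, hsub₂, hρ₂, hE₂⟩ := ih'
    refine ⟨_, union_subset_union hsub₁ hsub₂, union hA hB hρ₁ hρ₂, ?_⟩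
    rintro p (hp | hp) q (hq | hq) hpq
    · exact hE₁ p hp q hq hpq
    · exact (disjoint_left.1 hB (hρ₁.subset_prod hp).2 (hpq ▸ (hρ₂.subset_prod hq).2)).elim
    · exact (disjoint_left.1 hB (hρ₁.subset_prod hq).2 (hpq ▸ (hρ₂.subset_prod hp).2)).elim
    · exact hE₂ p hp q hq hpq

theorem exists_refinement (hS : ClosedUnderFinMod S) (hK : IsClosed K) (h : Matching S K A B ρ)
    (n : ℕ) : ∃ ρ' ⊆ ρ, Matching S K A B ρ' ∧
      (∀ p ∈ ρ', ∀ q ∈ ρ', p.2 = q.2 → p.1 n = q.1 n) ∧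
      ∀ p ∈ ρ', ∀ q ∈ ρ', p.1 = q.1 → p.2 n = q.2 n := by
  have hE : IsClopen {x : Cantor | x n = true} := (isClopen_discrete {true}).preimage
    (continuous_apply n)
  obtain ⟨ρ₁, hsub₁, hρ₁, h₁⟩ := h.exists_refinement_left hS hK hE
  obtain ⟨ρ₂, hsub₂, hρ₂, h₂⟩ := hρ₁.symm.exists_refinement_left hS hK hE
  have hsub : Prod.swap ⁻¹' ρ₂ ⊆ ρ₁ := fun p hp ↦ hsub₂ hp
  exact ⟨Prod.swap ⁻¹' ρ₂, hsub.trans hsub₁, hρ₂.symm,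
    fun p hp q hq hpq ↦ Bool.eq_iff_iff.2 (h₁ p (hsub hp) q (hsub hq) hpq),
    fun p hp q hq hpq ↦ Bool.eq_iff_iff.2 (h₂ p.swap hp q.swap hq hpq)⟩

end Matching

/-- A decreasing sequence of matchings whose `n`-th term determines the first `n` bits of either
coordinate from the other coordinate, so that the intersection is the graph of a bijection. -/
structure IsFusionSequence (S K A B : Set Cantor) (ρ : ℕ → Set (Cantor × Cantor)) : Prop where
  matching : ∀ n, Matching S K A B (ρ n)
  antitone : Antitone ρ
  bits_fst : ∀ n, ∀ p ∈ ρ n, ∀ q ∈ ρ n, p.2 = q.2 → bits n p.1 = bits n q.1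
  bits_snd : ∀ n, ∀ p ∈ ρ n, ∀ q ∈ ρ n, p.1 = q.1 → bits n p.2 = bits n q.2

theorem Matching.exists_isFusionSequence (hS : ClosedUnderFinMod S) (hK : IsClosed K)
    (h : Matching S K A B ρ) : ∃ ρ, IsFusionSequence S K A B ρ := by
  choose! f hsub hf hfst hsnd using
    fun ρ (h : Matching S K A B ρ) n ↦ h.exists_refinement hS hK n
  let r : ℕ → Set (Cantor × Cantor) := fun n ↦ Nat.rec ρ (fun n ρ ↦ f ρ n) n
  have hr (n : ℕ) : Matching S K A B (r n) := Nat.rec h (fun n hn ↦ hf _ hn n) n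
  have hanti : Antitone r := antitone_nat_of_succ_le fun n ↦ hsub _ (hr n) n
  have hmem {i n : ℕ} (hi : i < n) {p} (hp : p ∈ r n) : p ∈ r (i + 1) :=
    hanti (Nat.succ_le_of_lt hi) hp
  refine ⟨r, hr, hanti, fun n p hp q hq hpq ↦ ?_, fun n p hp q hq hpq ↦ ?_⟩
  · exact bits_eq_bits_iff.2 fun i hi ↦ hfst _ (hr i) i p (hmem hi hp) q (hmem hi hq) hpq
  · exact bits_eq_bits_iff.2 fun i hi ↦ hsnd _ (hr i) i p (hmem hi hp) q (hmem hi hq) hpq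

theorem mem_of_forall_exists_bits_eq (hK : IsClosed K) {x : Cantor}
    (h : ∀ n, ∃ z ∈ K, bits n z = bits n x) : x ∈ K := by
  by_contra hx
  obtain ⟨n, hn⟩ := exists_bits_preimage_subset hK.isOpen_compl hx
  obtain ⟨z, hzK, hz⟩ := h n
  exact hn hz hzK

theorem eq_of_forall_bits_eq {x y : Cantor} (h : ∀ n, bits n x = bits n y) : x = y :=
  funext fun n ↦ bits_eq_bits_iff.1 (h (n + 1)) n n.lt_succ_self

namespace IsFusionSequence

variable {ρ : ℕ → Set (Cantor × Cantor)}

theorem symm (h : IsFusionSequence S K A B ρ) :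
    IsFusionSequence S K B A fun n ↦ Prod.swap ⁻¹' ρ n where
  matching n := (h.matching n).symm
  antitone _ _ hmn := preimage_mono (h.antitone hmn)
  bits_fst n p hp q hq := h.bits_snd n p.swap hp q.swap hq
  bits_snd n p hp q hq := h.bits_fst n p.swap hp q.swap hq

theorem bijOn_fst (h : IsFusionSequence S K A B ρ) : BijOn Prod.fst (⋂ n, ρ n) A := by
  refine ⟨fun p hp ↦ ((h.matching 0).subset_prod (mem_iInter.1 hp 0)).1, ?_, fun x hx ↦ ?_⟩
  · refine fun p hp q hq hpq ↦ Prod.ext hpq (eq_of_forall_bits_eq fun n ↦ ?_)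
    exact h.bits_snd n p (mem_iInter.1 hp n) q (mem_iInter.1 hq n) hpq
  · have hclosed (n : ℕ) : IsClosed (ρ n ∩ Prod.fst ⁻¹' {x}) :=
      (h.matching n).isClosed.inter (isClosed_singleton.preimage continuous_fst)
    obtain ⟨p, hp⟩ := IsCompact.nonempty_iInter_of_sequence_nonempty_isCompact_isClosed
      (fun n ↦ ρ n ∩ Prod.fst ⁻¹' {x})
      (fun n ↦ inter_subset_inter_left _ (h.antitone n.le_succ))
      (fun n ↦ ((h.matching n).exists_mem x hx).imp' (Prod.mk x) fun _ hy ↦ ⟨hy, rfl⟩)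
      (hclosed 0).isCompact hclosed
    rw [mem_iInter] at hp
    exact ⟨p, mem_iInter.2 fun n ↦ (hp n).1, (hp 0).2⟩

theorem bijOn_snd (h : IsFusionSequence S K A B ρ) : BijOn Prod.snd (⋂ n, ρ n) B :=
  h.symm.bijOn_fst.comp ((Equiv.prodComm Cantor Cantor).bijOn fun p ↦ by simp)

theorem fst_mem (hK : IsClosed K) (h : IsFusionSequence S K A B ρ) {p : Cantor × Cantor}
    (hp : p ∈ ⋂ n, ρ n) (hpS : ¬ (p.1 ∈ S ↔ p.2 ∈ S)) : p.1 ∈ K := by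
  refine mem_of_forall_exists_bits_eq hK fun n ↦ ?_
  obtain ⟨z, hzK, hz⟩ := (h.matching n).exists_mem_fiber p (mem_iInter.1 hp n) hpS
  exact ⟨z, hzK, h.bits_fst n (z, p.2) hz p (mem_iInter.1 hp n) rfl⟩

theorem snd_mem (hK : IsClosed K) (h : IsFusionSequence S K A B ρ) {p : Cantor × Cantor}
    (hp : p ∈ ⋂ n, ρ n) (hpS : ¬ (p.1 ∈ S ↔ p.2 ∈ S)) : p.2 ∈ K := by
  refine h.symm.fst_mem hK (p := p.swap) ?_ (by simpa [iff_comm] using hpS)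
  simpa using hp

theorem homeomorphicRel (hK : IsClosed K) (hKS : ∀ x ∈ K, ∀ y ∈ K, x ∈ S ↔ y ∈ S)
    (h : IsFusionSequence S K A B ρ) : HomeomorphicRel S A B := by
  refine .of_isCompact (isClosed_iInter fun n ↦ (h.matching n).isClosed).isCompact h.bijOn_fst
    h.bijOn_snd fun p hp ↦ ?_
  by_contra hpS
  exact hpS (hKS _ (h.fst_mem hK hp hpS) _ (h.snd_mem hK hp hpS))

end IsFusionSequence

theorem homeomorphicRel_of_isClopen (hm : NullMeasurableSet S mu) (hS : ClosedUnderFinMod S)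
    (hA : IsClopen A) (hB : IsClopen B) (hA₀ : A.Nonempty) (hB₀ : B.Nonempty) :
    HomeomorphicRel S A B := by
  have hpos {V : Set Cantor} (hV : IsClopen V) (hV₀ : V.Nonempty) : 0 < mu.real V :=
    ENNReal.toReal_pos (hV.isOpen.measure_pos mu hV₀).ne' (measure_ne_top mu V)
  obtain ⟨ε, hε, hεlt⟩ := exists_between (lt_min (half_pos (hpos hA hA₀)) (half_pos (hpos hB hB₀)))
  obtain ⟨hεA, hεB⟩ := lt_min_iff.1 hεlt
  obtain ⟨K, hK, hKε, hKS⟩ := exists_isClosed_forall_mem_iff hm hS hε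
  have hdiff (V : Set Cantor) : mu.real (V \ K) < ε :=
    (measureReal_mono fun _ hx ↦ hx.2).trans_lt hKε
  have hsum (V : Set Cantor) := measureReal_inter_add_sdiff (μ := mu) (s := V) hK.measurableSet
  have h : Balanced K A B := ⟨by linarith [hdiff A, hdiff B, hsum B],
    by linarith [hdiff A, hdiff B, hsum A]⟩
  obtain ⟨ρ, hρ⟩ := (Matching.box hA hB h).exists_isFusionSequence (S := S) hS hK
  exact hρ.homeomorphicRel hK hKS

end Matching

/-! ### Open sets that are not compact -/

section IsOpen

variable {S O P Q : Set Cantor}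

theorem exists_disjoint_isClopen_iUnion_eq (hQ : IsOpen Q) (hQc : ¬ IsCompact Q) :
    ∃ D : ℕ → Set Cantor, Pairwise (Disjoint on D) ∧ (∀ n, IsClopen (D n) ∧ (D n).Nonempty) ∧
      ⋃ n, D n = Q := by
  let A : ℕ → Set Cantor := disjointed fun M ↦ bits M ⁻¹' {w | bits M ⁻¹' {w} ⊆ Q}
  have hA (n : ℕ) : IsClopen (A n) :=
    disjointedRec (fun _ _ h ↦ h.diff (isClopen_bits_preimage _)) (isClopen_bits_preimage _)
  have hAQ : ⋃ n, A n = Q := by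
    rw [iUnion_disjointed]
    refine (iUnion_subset fun M x hx ↦ ?_).antisymm
      fun x hx ↦ mem_iUnion.2 (exists_bits_preimage_subset hQ hx)
    exact mem_ofPred.1 hx rfl
  have hI : {n | (A n).Nonempty}.Infinite := by
    refine fun hI ↦ hQc ?_
    convert hI.isCompact_biUnion fun n _ ↦ (hA n).isClosed.isCompact
    rw [← hAQ]
    refine (iUnion_subset fun n x hx ↦ ?_).antisymm (iUnion₂_subset fun n _ ↦ subset_iUnion A n)
    exact mem_iUnion₂.2 ⟨n, ⟨x, hx⟩, hx⟩
  have := hI.to_subtype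
  let e := Nat.Subtype.orderIsoOfNat {n | (A n).Nonempty}
  refine ⟨fun n ↦ A (e n), fun m n hmn ↦ ?_, fun n ↦ ⟨hA _, (e n).2⟩, ?_⟩
  · exact disjoint_disjointed _ (Subtype.val_injective.ne (e.injective.ne hmn))
  · rw [← hAQ]
    refine (iUnion_subset fun n ↦ subset_iUnion A (e n)).antisymm (iUnion_subset fun n x hx ↦ ?_)
    obtain ⟨k, hk⟩ := e.surjective ⟨n, x, hx⟩
    exact mem_iUnion.2 ⟨k, by rwa [hk]⟩

theorem homeomorphicRel_of_isOpen_of_not_isCompact (hm : NullMeasurableSet S mu)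
    (hS : ClosedUnderFinMod S) (hP : IsOpen P) (hQ : IsOpen Q) (hPc : ¬ IsCompact P)
    (hQc : ¬ IsCompact Q) : HomeomorphicRel S P Q := by
  obtain ⟨D, hD, hDc, rfl⟩ := exists_disjoint_isClopen_iUnion_eq hP hPc
  obtain ⟨E, hE, hEc, rfl⟩ := exists_disjoint_isClopen_iUnion_eq hQ hQc
  exact .iUnion hD hE (fun n ↦ (hDc n).1.isOpen) (fun n ↦ (hEc n).1.isOpen)
    fun n ↦ homeomorphicRel_of_isClopen hm hS (hDc n).1 (hEc n).1 (hDc n).2 (hEc n).2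

theorem not_isOpen_singleton (p : Cantor) : ¬ IsOpen {p} := by
  intro h
  obtain ⟨q, hq, hqp : q =ᶠ[cofinite] p + 1⟩ :=
    (dense_setOf_eventuallyEq (p + 1)).inter_open_nonempty _ h ⟨p, rfl⟩
  rw [mem_singleton_iff.1 hq] at hqp
  obtain ⟨n, hn⟩ := hqp.exists
  simp at hn

theorem not_isCompact_sdiff_singleton (hO : IsOpen O) {p : Cantor} (hp : p ∈ O) :
    ¬ IsCompact (O \ {p}) := by
  intro h
  refine not_isOpen_singleton p ?_
  rw [← sdiff_sdiff_cancel_left (singleton_subset_iff.2 hp)]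
  exact hO.sdiff h.isClosed

theorem nonempty_homeomorph_preimage_val_of_isOpen (hm : NullMeasurableSet S mu)
    (hS : ClosedUnderFinMod S) (hne : S ≠ univ) (hP : IsOpen P) (hQ : IsOpen Q)
    (hP₀ : P.Nonempty) (hQ₀ : Q.Nonempty) :
    Nonempty ((Subtype.val ⁻¹' P : Set S) ≃ₜ (Subtype.val ⁻¹' Q : Set S)) := by
  obtain ⟨x, hx⟩ := (ne_univ_iff_exists_notMem S).1 hne
  have hremove {O : Set Cantor} (hO : IsOpen O) (hO₀ : O.Nonempty) :
      ∃ R, IsOpen R ∧ ¬ IsCompact R ∧ (Subtype.val ⁻¹' R : Set S) = Subtype.val ⁻¹' O := by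
    obtain ⟨p, hpO, hpx⟩ := (dense_setOf_eventuallyEq x).inter_open_nonempty O hO hO₀
    have hp : p ∉ S := (hS.mem_iff hpx).not.2 hx
    refine ⟨O \ {p}, hO.sdiff isClosed_singleton, not_isCompact_sdiff_singleton hO hpO, ?_⟩
    ext s
    exact and_iff_left (ne_of_mem_of_not_mem s.2 hp)
  obtain ⟨P', hP', hPc, hPS⟩ := hremove hP hP₀
  obtain ⟨Q', hQ', hQc, hQS⟩ := hremove hQ hQ₀
  rw [← hPS, ← hQS]
  exact (homeomorphicRel_of_isOpen_of_not_isCompact hm hS hP' hQ' hPc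
    hQc).nonempty_homeomorph_preimage_val

end IsOpen

end Cantor

theorem borel_semifilter_strongly_homogeneous_general (S : Set Cantor)
    (hm : NullMeasurableSet S Cantor.mu) (hS : ClosedUnderFinMod S) :
    ∀ U : Set S, IsClopen U → U.Nonempty → Nonempty (U ≃ₜ S) := by
  intro U hU hU₀
  obtain ⟨O, hO, rfl⟩ := isOpen_induced_iff.1 hU.isOpen
  have hO₀ : O.Nonempty := nonempty_of_nonempty_preimage hU₀
  suffices h : Nonempty ((Subtype.val ⁻¹' O : Set S) ≃ₜ (Subtype.val ⁻¹' univ : Set S)) from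
    h.map fun f ↦ f.trans (Homeomorph.Set.univ S)
  rcases eq_or_ne S univ with rfl | hne
  · have hO' : IsClopen O := hU.preimage (f := fun x ↦ ⟨x, mem_univ x⟩) (by fun_prop)
    exact (Cantor.homeomorphicRel_of_isClopen hm hS hO' isClopen_univ hO₀
      univ_nonempty).nonempty_homeomorph_preimage_val
  · exact Cantor.nonempty_homeomorph_preimage_val_of_isOpen hm hS hne hO isOpen_univ hO₀
      univ_nonempty

/-- Every Borel semifilter is strongly homogeneous. -/
theorem borel_semifilter_strongly_homogeneous (S : Set Cantor)
    (hB : @MeasurableSet Cantor (borel Cantor) S) (hS : IsSemifilter S) :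
    ∀ U : Set S, IsClopen U → U.Nonempty → Nonempty (U ≃ₜ S) :=
  borel_semifilter_strongly_homogeneous_general S
    (BorelSpace.measurable_eq (α := Cantor) ▸ hB : MeasurableSet S).nullMeasurableSet hS.2.2.2
end

section
/- Let G be an infinite prefilter on ω, i.e., an infinite collection of subsets of ω that is upward-closed and closed under finite intersections. Then either G is homeomorphic to the Cantor space 2^ω, or G is homeomorphic to a filter on ω. -/
open Set

/-!
A prefilter `G` is the family of characteristic functions of a Mathlib filter `l`, for which `⊥` is
allowed. Every member of `l` contains `⋂₀ l.sets = l.ker`, so forgetting the coordinates in `l.ker`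
loses no information: it is a homeomorphism of `G` onto the family of the filter `comap f l`, where
`f` enumerates `l.kerᶜ`. The latter filter has empty kernel, that is, it contains all cofinite sets.
It is either `⊥`, and then its family is the whole Cantor space, or a proper filter.
-/

open Filter Topology

theorem UpwardClosed.isUpperSet {S : Set Cantor} (hS : UpwardClosed S) : IsUpperSet S :=
  fun x y hxy hx ↦ hS x hx y hxy

theorem ClosedUnderInter.infClosed {S : Set Cantor} (hS : ClosedUnderInter S) : InfClosed S :=
  fun x hx y hy ↦ hS x hx y hy

section Extend

variable {ι κ X : Type*} {f : κ → ι}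

theorem mem_range_extend_iff (hf : f.Injective) {c x : ι → X} :
    x ∈ range (fun z : κ → X ↦ f.extend z c) ↔ ∀ i ∉ range f, x i = c i := by
  constructor
  · rintro ⟨z, rfl⟩ i hi
    exact Function.extend_apply' z c i hi
  · intro hx
    refine ⟨x ∘ f, funext fun i ↦ ?_⟩
    by_cases hi : i ∈ range f
    · obtain ⟨k, rfl⟩ := hi
      exact hf.extend_apply (x ∘ f) c k
    · exact (Function.extend_apply' (x ∘ f) c i hi).trans (hx i hi).symm

variable [TopologicalSpace X]

theorem continuous_extend (hf : f.Injective) (c : ι → X) :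
    Continuous fun z : κ → X ↦ f.extend z c := by
  refine continuous_pi fun i ↦ ?_
  by_cases hi : i ∈ range f
  · obtain ⟨k, rfl⟩ := hi
    simpa only [hf.extend_apply] using continuous_apply k
  · simpa only [Function.extend_apply' _ c i hi] using continuous_const

theorem isEmbedding_extend (hf : f.Injective) (c : ι → X) :
    IsEmbedding fun z : κ → X ↦ f.extend z c :=
  .of_leftInverse (f := fun x k ↦ x (f k)) (fun z ↦ funext (hf.extend_apply z c))
    (by fun_prop) (continuous_extend hf c)

end Extend

section CharFamily

variable {ι κ : Type*} {l : Filter ι} {f : κ → ι}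

/-- The family of sets of a filter, as a set of `Bool`-valued characteristic functions, so that it
carries the subspace topology of the product `ι → Bool`. Since `⊥` is a `Filter`, for `ι = ℕ` these
are exactly the nonempty prefilters. -/
def charFamily (l : Filter ι) : Set (ι → Bool) :=
  {x | ∀ᶠ i in l, x i = true}

theorem charFamily_bot : charFamily (⊥ : Filter ι) = univ :=
  eq_univ_of_forall fun x ↦ eventually_bot (p := fun i ↦ x i = true)

theorem exists_charFamily_eq {G : Set (ι → Bool)} (hne : G.Nonempty) (hup : IsUpperSet G)
    (hinf : InfClosed G) : ∃ l : Filter ι, charFamily l = G := by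
  let l : Filter ι :=
    { sets := {s | ∃ x ∈ G, ∀ i, x i = true → i ∈ s}
      univ_sets := hne.imp fun x hx ↦ ⟨hx, fun i _ ↦ mem_univ i⟩
      sets_of_superset := by
        rintro s t ⟨x, hx, hxs⟩ hst
        exact ⟨x, hx, fun i hi ↦ hst (hxs i hi)⟩
      inter_sets := by
        rintro s t ⟨x, hx, hxs⟩ ⟨y, hy, hyt⟩
        refine ⟨x ⊓ y, hinf hx hy, fun i hi ↦ ?_⟩
        have hxy : x i = true ∧ y i = true := Bool.and_eq_true_iff.mp hi
        exact ⟨hxs i hxy.1, hyt i hxy.2⟩ }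
  refine ⟨l, Subset.antisymm ?_ fun x hx ↦ ⟨x, hx, fun _ ↦ id⟩⟩
  rintro y ⟨x, hx, hxy⟩
  exact hup hxy hx

theorem isFilterOnOmega_charFamily {l : Filter ℕ} [l.NeBot] (hl : l ≤ cofinite) :
    IsFilterOnOmega (charFamily l) := by
  refine ⟨⟨?_, ?_, ?_, ?_⟩, ?_⟩
  · exact fun h ↦ h.exists.elim fun _ ↦ Bool.false_ne_true
  · exact .of_forall fun _ ↦ rfl
  · exact fun x hx y hxy ↦ hx.mono hxy
  · intro x hx y hxy
    have hxy' : ∀ᶠ n in l, x n = y n := hl (eventually_cofinite.mpr hxy)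
    filter_upwards [hx, hxy'] with n hn hn' using hn' ▸ hn
  · intro x hx y hy
    filter_upwards [hx, hy] with n hxn hyn using Bool.and_eq_true_iff.mpr ⟨hxn, hyn⟩

theorem eq_true_of_mem_charFamily {x : ι → Bool} (hx : x ∈ charFamily l) {i : ι}
    (hi : i ∈ l.ker) : x i = true :=
  mem_ker.mp hi _ hx

theorem charFamily_subset_range_extend (hf : f.Injective) (hl : l.kerᶜ ⊆ range f) :
    charFamily l ⊆ range fun z : κ → Bool ↦ f.extend z fun _ ↦ true :=
  fun _ hx ↦ (mem_range_extend_iff hf).mpr fun _ hi ↦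
    eq_true_of_mem_charFamily hx (notMem_compl_iff.mp fun h ↦ hi (hl h))

theorem finite_charFamily_of_finite_compl_ker (hl : l.kerᶜ.Finite) : (charFamily l).Finite := by
  have : Finite ↥l.kerᶜ := hl
  exact (finite_range _).subset
    (charFamily_subset_range_extend Subtype.val_injective Subtype.range_coe.superset)

theorem charFamily_comap (hf : f.Injective) (l : Filter ι) :
    charFamily (comap f l) = (fun z ↦ f.extend z fun _ ↦ true) ⁻¹' charFamily l := by
  ext z
  suffices h : ∀ i, (∀ k, f k = i → z k = true) ↔ f.extend z (fun _ ↦ true) i = true from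
    eventually_comap.trans (eventually_congr (.of_forall h))
  intro i
  by_cases hi : i ∈ range f
  · obtain ⟨k, rfl⟩ := hi
    simp only [hf.extend_apply, hf.eq_iff, forall_eq]
  · rw [Function.extend_apply' z _ i hi]
    exact iff_of_true (fun k hk ↦ (hi ⟨k, hk⟩).elim) rfl

theorem nonempty_homeomorph_charFamily_comap (hf : f.Injective) (hl : l.kerᶜ ⊆ range f) :
    Nonempty (charFamily l ≃ₜ charFamily (comap f l)) := by
  rw [charFamily_comap hf]
  exact ⟨((isEmbedding_extend hf _).homeomorphOfSubsetRange
    (charFamily_subset_range_extend hf hl)).symm⟩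

theorem comap_le_cofinite_of_range_subset_compl_ker (hl : range f ⊆ l.kerᶜ) :
    comap f l ≤ cofinite := by
  rw [le_cofinite_iff_ker, ker_comap, preimage_eq_empty_iff, disjoint_comm]
  exact subset_compl_iff_disjoint_right.mp hl

end CharFamily

theorem infinite_prefilter_cantor_or_filter_general {ι : Type*} {l : Filter ι}
    (hcount : l.kerᶜ.Countable) (hinf : (charFamily l).Infinite) :
    Nonempty (charFamily l ≃ₜ Cantor) ∨
      ∃ F : Set Cantor, IsFilterOnOmega F ∧ Nonempty (charFamily l ≃ₜ F) := by
  have : Countable ↥l.kerᶜ := hcount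
  have hker : l.kerᶜ.Infinite := mt finite_charFamily_of_finite_compl_ker hinf
  have : Infinite ↥l.kerᶜ := hker.to_subtype
  obtain ⟨e⟩ : Nonempty (ℕ ≃ ↥l.kerᶜ) := nonempty_equiv_of_countable
  let f : ℕ → ι := fun n ↦ e n
  have hf : f.Injective := Subtype.val_injective.comp e.injective
  have hrange : range f = l.kerᶜ := (e.surjective.range_comp _).trans Subtype.range_coe
  obtain ⟨h⟩ := nonempty_homeomorph_charFamily_comap hf hrange.superset
  rcases (comap f l).eq_or_neBot with hbot | hne
  · rw [hbot, charFamily_bot] at h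
    exact .inl ⟨h.trans (Homeomorph.Set.univ Cantor)⟩
  · have hcofinite : comap f l ≤ cofinite :=
      comap_le_cofinite_of_range_subset_compl_ker hrange.subset
    exact .inr ⟨_, isFilterOnOmega_charFamily hcofinite, ⟨h⟩⟩

/-- Every infinite prefilter is homeomorphic to Cantor space or to a filter. -/
theorem infinite_prefilter_cantor_or_filter (G : Set Cantor) (hinf : G.Infinite)
    (hup : UpwardClosed G) (hint : ClosedUnderInter G) :
    Nonempty (G ≃ₜ Cantor) ∨ ∃ F : Set Cantor, IsFilterOnOmega F ∧ Nonempty (G ≃ₜ F) := by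
  obtain ⟨l, rfl⟩ := exists_charFamily_eq hinf.nonempty hup.isUpperSet hint.infClosed
  exact infinite_prefilter_cantor_or_filter_general l.kerᶜ.to_countable hinf
end

section
/- There exists a filter on ω that, as a subspace of the Cantor space 2^ω, is homeomorphic to the space ℚ of rational numbers, and there exists a filter on ω that, as a subspace of 2^ω, is homeomorphic to the product ℚ × 2^ω. -/
open Set

/-!
The filters are the cofinite filter and the filter of the sets containing almost all even numbers.

The cofinite filter is the class of the constant sequence `true` modulo finite changes, and
coordinatewise swaps carry it onto the class of the alternating sequence. Each member of that class
takes both values infinitely often, so changing one far coordinate moves it slightly up or slightly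
down in the lexicographic order. Hence the product topology on the class is the order topology of a
countable dense order without endpoints, which Cantor's theorem identifies with `ℚ`.

In the second filter the odd coordinates are arbitrary, which contributes the factor `2^ω`.
-/

open Filter PiNat

section Lex

variable {E : ℕ → Type*}

/-- The product topology on lexicographically ordered sequences, which in general is not the
order topology. -/
instance instTopologicalSpaceLexPi [∀ n, TopologicalSpace (E n)] :
    TopologicalSpace (Lex (∀ n, E n)) :=
  inferInstanceAs (TopologicalSpace (∀ n, E n))

/-- The identification of sequences with lexicographically ordered sequences. -/
def toLexHomeomorph (E : ℕ → Type*) [∀ n, TopologicalSpace (E n)] :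
    (∀ n, E n) ≃ₜ Lex (∀ n, E n) where
  toEquiv := toLex
  continuous_toFun := continuous_id
  continuous_invFun := continuous_id

variable [∀ n, LinearOrder (E n)]

theorem ordConnected_cylinder (x : ∀ n, E n) (n : ℕ) :
    (ofLex ⁻¹' cylinder x n : Set (Lex (∀ n, E n))).OrdConnected := by
  refine ⟨fun a ha c hc y ⟨hay, hyc⟩ j => ?_⟩
  induction j using Nat.strong_induction_on with
  | _ j ih =>
    intro hj
    have hy : ∀ k < j, y k = x k := fun k hk => ih k hk (hk.trans hj)
    have not_below : ¬ y j < a j := fun h =>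
      hay.not_gt ⟨j, fun k hk => (hy k hk).trans (ha k (hk.trans hj)).symm, h⟩
    have not_above : ¬ c j < y j := fun h =>
      hyc.not_gt ⟨j, fun k hk => (hc k (hk.trans hj)).trans (hy k hk).symm, h⟩
    exact le_antisymm ((not_lt.1 not_above).trans_eq (hc j hj))
      ((ha j hj).symm.trans_le (not_lt.1 not_below))

theorem isOpen_setOf_lex_lt [∀ n, TopologicalSpace (E n)] [∀ n, DiscreteTopology (E n)] :
    IsOpen {p : Lex (∀ n, E n) × Lex (∀ n, E n) | p.1 < p.2} := by
  have continuous_coords (n : ℕ) :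
      Continuous fun p : Lex (∀ n, E n) × Lex (∀ n, E n) => (p.1 n, p.2 n) :=
    ((continuous_apply n).comp continuous_fst).prodMk ((continuous_apply n).comp continuous_snd)
  have isOpen_coords (n : ℕ) (R : Set (E n × E n)) :
      IsOpen {p : Lex (∀ n, E n) × Lex (∀ n, E n) | (p.1 n, p.2 n) ∈ R} :=
    (isOpen_discrete R).preimage (continuous_coords n)
  have lt_eq_iUnion : {p : Lex (∀ n, E n) × Lex (∀ n, E n) | p.1 < p.2} =
      ⋃ i, (⋂ j ∈ Set.Iio i, {p | (p.1 j, p.2 j) ∈ Set.diagonal (E j)}) ∩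
        {p | (p.1 i, p.2 i) ∈ {q : E i × E i | q.1 < q.2}} := by
    ext p
    simp only [mem_iUnion, mem_inter_iff, mem_iInter]
    rfl
  rw [lt_eq_iUnion]
  exact isOpen_iUnion fun i =>
    ((Set.finite_Iio i).isOpen_biInter fun j _ => isOpen_coords j _).inter (isOpen_coords i _)

instance instOrderClosedTopologyLexPi [∀ n, TopologicalSpace (E n)]
    [∀ n, DiscreteTopology (E n)] : OrderClosedTopology (Lex (∀ n, E n)) where
  isClosed_le' := by
    simp only [← isOpen_compl_iff, compl_ofPred, not_le]
    exact isOpen_setOf_lex_lt.preimage continuous_swap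

/-- A set of sequences is lexicographically dense in itself if each of its points is approximated
by smaller and by larger points of the set, sharing arbitrarily long initial segments with it. This
is what makes the subspace topology and the order topology agree. -/
def LexDenseInItself (S : Set (Lex (∀ n, E n))) : Prop :=
  ∀ x ∈ S, ∀ n, (∃ a ∈ S, ofLex a ∈ cylinder (ofLex x) n ∧ a < x) ∧
    ∃ c ∈ S, ofLex c ∈ cylinder (ofLex x) n ∧ x < c

namespace LexDenseInItself

variable {S : Set (Lex (∀ n, E n))}

theorem noMinOrder (hS : LexDenseInItself S) : NoMinOrder S where
  exists_lt x :=
    let ⟨a, haS, _, hax⟩ := (hS x x.2 0).1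
    ⟨⟨a, haS⟩, hax⟩

theorem noMaxOrder (hS : LexDenseInItself S) : NoMaxOrder S where
  exists_gt x :=
    let ⟨c, hcS, _, hxc⟩ := (hS x x.2 0).2
    ⟨⟨c, hcS⟩, hxc⟩

theorem denselyOrdered (hS : LexDenseInItself S) : DenselyOrdered S where
  dense x y := by
    rintro ⟨i, hagree, hlt⟩
    obtain ⟨c, hcS, hc, hxc⟩ := (hS x x.2 (i + 1)).2
    refine ⟨⟨c, hcS⟩, hxc, i, fun j hj => (hc j (by omega)).trans (hagree j hj), ?_⟩
    exact (hc i i.lt_succ_self).trans_lt hlt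

theorem exists_Ioo_subset_cylinder (hS : LexDenseInItself S) (x : S) (n : ℕ) :
    ∃ a c : S, x ∈ Ioo a c ∧ ∀ y ∈ Ioo a c, ofLex y.1 ∈ cylinder (ofLex x.1) n := by
  obtain ⟨⟨a, haS, ha, hax⟩, c, hcS, hc, hxc⟩ := hS x x.2 n
  exact ⟨⟨a, haS⟩, ⟨c, hcS⟩, ⟨hax, hxc⟩, fun y hy =>
    (ordConnected_cylinder _ n).out ha hc ⟨hy.1.le, hy.2.le⟩⟩

variable [∀ n, TopologicalSpace (E n)] [∀ n, DiscreteTopology (E n)]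

theorem orderTopology (hS : LexDenseInItself S) : OrderTopology S := by
  refine ⟨le_antisymm (le_generateFrom ?_) ?_⟩
  · rintro _ ⟨a, rfl | rfl⟩
    exacts [isOpen_Ioi, isOpen_Iio]
  · let orderTop : TopologicalSpace S := Preorder.topology S
    have : OrderTopology S := ⟨rfl⟩
    suffices h : Continuous fun x : S => ofLex x.1 from continuous_iff_le_induced.1 h
    refine continuous_pi fun n => IsLocallyConstant.continuous ?_
    refine (IsLocallyConstant.iff_eventually_eq _).2 fun x => ?_
    obtain ⟨a, c, hx, hcyl⟩ := hS.exists_Ioo_subset_cylinder x (n + 1)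
    filter_upwards [Ioo_mem_nhds hx.1 hx.2] with y hy
    exact hcyl y hy n n.lt_succ_self

theorem nonempty_homeomorph_rat (hS : LexDenseInItself S) (hcount : S.Countable)
    (hne : S.Nonempty) : Nonempty (S ≃ₜ ℚ) := by
  have := hS.noMinOrder
  have := hS.noMaxOrder
  have := hS.denselyOrdered
  have := hS.orderTopology
  have := hcount.to_subtype
  have := hne.to_subtype
  exact (Order.iso_of_countable_dense S ℚ).map OrderIso.toHomeomorph

end LexDenseInItself

end Lex

/-- The class of `p` modulo finite changes; the cofinite filter is the class of the constant
sequence `true`. -/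
def cofiniteClass {ι : Type*} {E : ι → Type*} (p : ∀ i, E i) : Set (∀ i, E i) :=
  {x | ∀ᶠ i in cofinite, x i = p i}

namespace cofiniteClass

section

variable {ι : Type*} {E : ι → Type*}

theorem mem_iff {p x : ∀ i, E i} : x ∈ cofiniteClass p ↔ ∀ᶠ i in cofinite, x i = p i :=
  Iff.rfl

theorem self_mem (p : ∀ i, E i) : p ∈ cofiniteClass p :=
  mem_iff.2 (.of_forall fun _ => rfl)

theorem update_mem [DecidableEq ι] {p x : ∀ i, E i} (hx : x ∈ cofiniteClass p) (i : ι) (a : E i) :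
    Function.update x i a ∈ cofiniteClass p := by
  filter_upwards [hx, (finite_singleton i).compl_mem_cofinite] with j hj hji
  rwa [Function.update_of_ne hji]

theorem countable [Countable ι] [∀ i, Countable (E i)] (p : ∀ i, E i) :
    (cofiniteClass p).Countable := by
  classical
  let patch (q : Σ s : Finset ι, ∀ i : s, E i) (i : ι) : E i :=
    if h : i ∈ q.1 then q.2 ⟨i, h⟩ else p i
  refine (countable_range patch).mono fun x hx => ?_
  have hfin : {i | x i ≠ p i}.Finite := hx
  refine ⟨⟨hfin.toFinset, fun i => x i⟩, funext fun i => ?_⟩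
  by_cases h : x i = p i <;> simp [patch, h]

variable [∀ i, TopologicalSpace (E i)] [∀ i, DiscreteTopology (E i)]

open Classical in
/-- Any two classes are homeomorphic: swap the values `p i` and `q i` in every coordinate `i`. -/
noncomputable def homeomorph (p q : ∀ i, E i) : cofiniteClass p ≃ₜ cofiniteClass q :=
  (Homeomorph.piCongrRight fun i => (Equiv.swap (p i) (q i)).toHomeomorphOfDiscrete).subtype
    fun x => by
      have swap_eq_iff (i : ι) : Equiv.swap (p i) (q i) (x i) = q i ↔ x i = p i := by
        rw [Equiv.swap_apply_eq_iff, Equiv.swap_apply_right]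
      exact mem_iff.trans (eventually_congr (.of_forall fun i => (swap_eq_iff i).symm))

end

variable {E : ℕ → Type*}

theorem lexDenseInItself [∀ n, LinearOrder (E n)] {p : ∀ n, E n}
    (hlt : ∃ᶠ n in cofinite, ∃ a, a < p n) (hgt : ∃ᶠ n in cofinite, ∃ a, p n < a) :
    LexDenseInItself (ofLex ⁻¹' cofiniteClass p) := by
  intro x hx n
  have hlater : ∀ᶠ m in cofinite, n ≤ m := by
    simpa only [Nat.cofinite_eq_atTop] using eventually_ge_atTop n
  have update_mem_cylinder {m : ℕ} (hnm : n ≤ m) (a : E m) :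
      Function.update (ofLex x) m a ∈ cylinder (ofLex x) n :=
    cylinder_anti _ hnm (PiNat.update_mem_cylinder _ m a)
  constructor
  · obtain ⟨m, ⟨⟨a, ha⟩, hm⟩, hnm⟩ := ((hlt.and_eventually hx).and_eventually hlater).exists
    exact ⟨toLex (Function.update (ofLex x) m a), update_mem hx m a, update_mem_cylinder hnm a,
      Pi.toLex_update_lt_self_iff.2 (ha.trans_eq hm.symm)⟩
  · obtain ⟨m, ⟨⟨a, ha⟩, hm⟩, hnm⟩ := ((hgt.and_eventually hx).and_eventually hlater).exists
    exact ⟨toLex (Function.update (ofLex x) m a), update_mem hx m a, update_mem_cylinder hnm a,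
      Pi.lt_toLex_update_self_iff.2 (hm.trans_lt ha)⟩

variable [∀ n, TopologicalSpace (E n)] [∀ n, DiscreteTopology (E n)]

theorem nonempty_homeomorph_rat_of_frequently [∀ n, LinearOrder (E n)] [∀ n, Countable (E n)]
    {p : ∀ n, E n} (hlt : ∃ᶠ n in cofinite, ∃ a, a < p n)
    (hgt : ∃ᶠ n in cofinite, ∃ a, p n < a) : Nonempty (cofiniteClass p ≃ₜ ℚ) := by
  obtain ⟨e⟩ := (lexDenseInItself hlt hgt).nonempty_homeomorph_rat (countable p)
    ⟨toLex p, self_mem p⟩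
  exact ⟨((toLexHomeomorph E).subtype fun _ => Iff.rfl).trans e⟩

theorem nonempty_homeomorph_rat [∀ n, Countable (E n)] [∀ n, Nontrivial (E n)]
    (p : ∀ n, E n) : Nonempty (cofiniteClass p ≃ₜ ℚ) := by
  choose rank rank_injective using fun n => Countable.exists_injective_nat (E n)
  let order (n : ℕ) : LinearOrder (E n) := LinearOrder.lift' (rank n) (rank_injective n)
  choose a b hab using fun n => exists_pair_lt (E n)
  let q (n : ℕ) : E n := if Even n then b n else a n
  have hlt : ∃ᶠ n in cofinite, ∃ c, c < q n := by
    refine Nat.cofinite_eq_atTop ▸ Nat.frequently_even.mono fun n hn => ⟨a n, ?_⟩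
    simpa [q, hn] using hab n
  have hgt : ∃ᶠ n in cofinite, ∃ c, q n < c := by
    refine Nat.cofinite_eq_atTop ▸ Nat.frequently_odd.mono fun n hn => ⟨b n, ?_⟩
    simpa [q, Nat.not_even_iff_odd.2 hn] using hab n
  exact (nonempty_homeomorph_rat_of_frequently hlt hgt).map (homeomorph p q).trans

end cofiniteClass

/-- The characteristic functions of the members of the filter `l`, which is `l` as a subspace of
`2^ι`. -/
def filterCharFuns {ι : Type*} (l : Filter ι) : Set (ι → Bool) :=
  {x | ∀ᶠ i in l, x i = true}

namespace filterCharFuns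

theorem isFilterOnOmega (l : Filter ℕ) [l.NeBot] (hl : l ≤ cofinite) :
    IsFilterOnOmega (filterCharFuns l) := by
  refine ⟨⟨?empty, ?univ, ?upward, ?finMod⟩, ?inter⟩
  case empty =>
    intro h
    obtain ⟨_, hn⟩ := h.exists
    exact Bool.false_ne_true hn
  case univ => exact .of_forall fun _ => rfl
  case upward => exact fun x hx y hxy => hx.mono hxy
  case finMod =>
    intro x hx y hxy
    filter_upwards [hx, hl hxy.compl_mem_cofinite] with _ hxn hn
    exact (not_not.1 hn).symm.trans hxn
  case inter =>
    intro x hx y hy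
    filter_upwards [hx, hy] with _ hxn hyn
    rw [hxn, hyn, Bool.and_self]

/-- A filter concentrated on the first summand of `μ ≃ ι ⊕ κ` puts no constraint on the
coordinates in the second summand. -/
def mapInlHomeomorph {ι κ μ : Type*} (l : Filter ι) (e : ι ⊕ κ ≃ μ) :
    filterCharFuns (l.map (e ∘ Sum.inl)) ≃ₜ filterCharFuns l × (κ → Bool) :=
  let split : (μ → Bool) ≃ₜ (ι → Bool) × (κ → Bool) :=
    (Homeomorph.piCongrLeft (Y := fun _ => Bool) e).symm.trans
      Homeomorph.sumArrowHomeomorphProdArrow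
  let restrictSplit : filterCharFuns (l.map (e ∘ Sum.inl)) ≃ₜ
      ↥(filterCharFuns l ×ˢ (univ : Set (κ → Bool))) :=
    split.subtype fun _ => (and_iff_left trivial).symm
  restrictSplit.trans <|
    (Homeomorph.Set.prod _ _).trans ((Homeomorph.refl _).prodCongr (Homeomorph.Set.univ _))

end filterCharFuns

/-- There exist filters homeomorphic to ℚ and to ℚ × 2^ω. -/
theorem exists_filter_homeomorphic_rat_and_rat_cantor :
    (∃ F : Set Cantor, IsFilterOnOmega F ∧ Nonempty (F ≃ₜ ℚ)) ∧
      (∃ F : Set Cantor, IsFilterOnOmega F ∧ Nonempty (F ≃ₜ (ℚ × Cantor))) := by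
  obtain ⟨toRat⟩ : Nonempty (filterCharFuns (cofinite : Filter ℕ) ≃ₜ ℚ) :=
    cofiniteClass.nonempty_homeomorph_rat fun _ => true
  refine ⟨⟨filterCharFuns cofinite, filterCharFuns.isFilterOnOmega _ le_rfl, ⟨toRat⟩⟩, ?_⟩
  let evenCofinite : Filter ℕ := cofinite.map (Equiv.natSumNatEquivNat ∘ Sum.inl)
  have evenCofinite_le : evenCofinite ≤ cofinite :=
    (Equiv.natSumNatEquivNat.injective.comp Sum.inl_injective).tendsto_cofinite
  exact ⟨filterCharFuns evenCofinite, filterCharFuns.isFilterOnOmega _ evenCofinite_le,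
    ⟨(filterCharFuns.mapInlHomeomorph cofinite Equiv.natSumNatEquivNat).trans
      (toRat.prodCongr (Homeomorph.refl _))⟩⟩
end

section
/- There exists a semifilter S on ω such that, as a subspace of the Cantor space 2^ω: (i) S is the union of a completely metrizable subspace and a σ-compact subspace; (ii) no nonempty relatively open subset of S is σ-compact; and (iii) no nonempty relatively open subset of S is the union of a completely metrizable subspace and a countable subspace. (Consequently S is homeomorphic to van Mill's space 𝐒.) -/
open Set

open Filter Topology TopologicalSpace

/-!
Fix disjoint infinite `I, J ⊆ ω` with `ω \ (I ∪ J)` infinite, and let `S` consist of the sets that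
meet `I` in an infinite set (a `Gδ` condition) or contain almost all of `J` (a σ-compact one).

Inside a given open set, fixing the coordinates outside an infinite `K ⊆ ω` cuts out a Cantor set
in which the finite variants of its base point `w` form a countable crowded set `Q`; by the Baire
category theorem `Q` is neither `Gδ` nor completely metrizable. If `K ⊆ I` and `w` vanishes almost
everywhere on `I` and `J`, then `Q` is the complement of `S` in this Cantor set, so no nonempty
relatively open subset of `S` is σ-compact. If `K ⊆ J` and `w` is almost everywhere `0` on `I` and
`1` on `J`, then `Q` is the trace of `S`; diagonalizing along `ω \ (I ∪ J)` moves the Cantor set off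
any prescribed countable set, so a completely metrizable piece covering the rest of `S` there would
contain `Q` as a closed subset.
-/

section CompleteMetrizability

variable {X : Type*} [TopologicalSpace X]

lemma completelyMetrizable_iff : CompletelyMetrizable X ↔ IsCompletelyMetrizableSpace X :=
  ⟨fun h => ⟨h⟩, fun h => h.complete⟩

lemma isCompletelyMetrizableSpace_inter_of_isClosed {C A : Set X} (hC : IsClosed C)
    [IsCompletelyMetrizableSpace A] : IsCompletelyMetrizableSpace ↥(C ∩ A) := by
  have hclosed : IsClosed ((↑) ⁻¹' (C ∩ A) : Set A) := by
    rw [Subtype.preimage_coe_inter_self]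
    exact hC.preimage continuous_subtype_val
  exact (IsClosedEmbedding.inclusion inter_subset_right hclosed).IsCompletelyMetrizableSpace

lemma isCompletelyMetrizableSpace_of_isOpen [IsCompletelyMetrizableSpace X] {U : Set X}
    (hU : IsOpen U) : IsCompletelyMetrizableSpace U := by
  let := upgradeIsCompletelyMetrizable X
  exact inferInstanceAs (IsCompletelyMetrizableSpace (Opens.CompleteCopy ⟨U, hU⟩))

lemma isCompletelyMetrizableSpace_iInter [T2Space X] {ι : Type*} [Countable ι] [Nonempty ι]
    {s : ι → Set X} (hs : ∀ i, IsCompletelyMetrizableSpace (s i)) :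
    IsCompletelyMetrizableSpace ↥(⋂ i, s i) := by
  let i₀ := Classical.arbitrary ι
  let diag : ↥(⋂ i, s i) → ∀ i, s i := fun x i => ⟨x, mem_iInter.1 x.2 i⟩
  have hcoord (i : ι) : Continuous fun y : ∀ i, s i => (y i : X) := by fun_prop
  have hrange : range diag = ⋂ i, {y | (y i : X) = y i₀} := by
    ext y
    simp only [mem_range, mem_iInter, mem_ofPred_eq]
    refine ⟨?_, fun hy => ?_⟩
    · rintro ⟨x, rfl⟩ i
      rfl
    · exact ⟨⟨y i₀, mem_iInter.2 fun i => hy i ▸ (y i).2⟩, funext fun i => Subtype.ext (hy i).symm⟩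
  have hembedding : IsEmbedding diag :=
    .of_comp (by fun_prop) (hcoord i₀) .subtypeVal
  have hclosed : IsClosed (range diag) := by
    rw [hrange]
    exact isClosed_iInter fun i => isClosed_eq (hcoord i) (hcoord i₀)
  exact IsClosedEmbedding.IsCompletelyMetrizableSpace ⟨hembedding, hclosed⟩

lemma isCompletelyMetrizableSpace_of_isGδ [IsCompletelyMetrizableSpace X] {A : Set X}
    (hA : IsGδ A) : IsCompletelyMetrizableSpace A := by
  obtain ⟨U, hU, rfl⟩ := hA.eq_iInter_nat
  exact isCompletelyMetrizableSpace_iInter fun n => isCompletelyMetrizableSpace_of_isOpen (hU n)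

lemma isGδ_compl_of_isSigmaCompact [T2Space X] {A : Set X} (hA : IsSigmaCompact A) :
    IsGδ Aᶜ := by
  obtain ⟨K, hK, rfl⟩ := hA
  rw [compl_iUnion]
  exact .iInter_of_isOpen fun n => (hK n).isClosed.isOpen_compl

lemma not_baireSpace_of_countable [T1Space X] [Countable X] [Nonempty X]
    [∀ x : X, (𝓝[≠] x).NeBot] : ¬ BaireSpace X := fun _ => by
  obtain ⟨x, hx⟩ := nonempty_interior_of_iUnion_of_closed
    (fun x : X => isClosed_singleton (x := x)) (iUnion_of_singleton X)
  simp [interior_singleton] at hx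

end CompleteMetrizability

section Germs

variable {ι α : Type*} {l : Filter ι} {w x y : ι → α} {s : Set ι}

/-- The functions with the same germ as `w` along the filter `l`. Along `cofinite ⊓ 𝓟 s` these are
the functions that agree with `w` at all but finitely many points of `s`. -/
def germClass (l : Filter ι) (w : ι → α) : Set (ι → α) := {x | x =ᶠ[l] w}

lemma mem_germClass : x ∈ germClass l w ↔ x =ᶠ[l] w := Iff.rfl

lemma self_mem_germClass (l : Filter ι) (w : ι → α) : w ∈ germClass l w := EventuallyEq.refl l w

lemma germClass_congr (h : w =ᶠ[l] y) : germClass l w = germClass l y :=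
  Set.ext fun _ => ⟨fun hx => hx.trans h, fun hx => hx.trans h.symm⟩

lemma mem_germClass_congr (h : x =ᶠ[l] y) : x ∈ germClass l w ↔ y ∈ germClass l w :=
  ⟨h.symm.trans, h.trans⟩

lemma disjoint_germClass_const [l.NeBot] {a b : α} (hab : a ≠ b) :
    Disjoint (germClass l fun _ => a) (germClass l fun _ => b) :=
  disjoint_left.2 fun _ ha hb => (ha.symm.trans hb).exists.elim fun _ => hab

lemma eventuallyEq_inf_principal_iff_of_eqOn_compl (h : EqOn x w sᶜ) :
    x =ᶠ[l ⊓ 𝓟 s] w ↔ x =ᶠ[l] w := by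
  refine ⟨fun hs => ?_, fun hx => hx.filter_mono inf_le_left⟩
  filter_upwards [eventually_inf_principal.1 hs] with n hn
  exact by_cases hn fun hns => h hns

lemma eventuallyEq_cofinite_inf_principal_of_eqOn_diff {t : Set ι} (ht : t.Finite)
    (h : EqOn x w (s \ t)) : x =ᶠ[cofinite ⊓ 𝓟 s] w := by
  filter_upwards [mem_inf_of_left ht.compl_mem_cofinite, mem_inf_of_right (mem_principal_self s)]
    with n hnt hns
  exact h ⟨hns, hnt⟩

lemma isSigmaCompact_germClass [TopologicalSpace α] [CompactSpace α] [T1Space α]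
    [l.IsCountablyGenerated] (w : ι → α) : IsSigmaCompact (germClass l w) := by
  obtain ⟨s, hs⟩ := l.exists_antitone_basis
  have hunion : germClass l w = ⋃ n, (s n).pi fun i => {w i} := by
    ext x
    simp [mem_germClass, EventuallyEq, hs.eventually_iff, Set.mem_pi]
  rw [hunion]
  exact isSigmaCompact_iUnion_of_isCompact _ fun n =>
    (isClosed_set_pi fun _ _ => isClosed_singleton).isCompact

end Germs

section Subcubes

variable {ι α : Type*}

/-- The functions that agree with `w` at every coordinate outside `s`: a closed copy of `s → α`, and
a Cantor set when `s` is countably infinite and `α = Bool`. -/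
def subcube (w : ι → α) (s : Set ι) : Set (ι → α) := {x | EqOn x w sᶜ}

/-- The functions that differ from `w` only at finitely many coordinates, all of them in `s`.
For infinite `s` this is the crowded, typically countable, set to which the Baire category theorem
is applied. -/
def finiteVariants (w : ι → α) (s : Set ι) : Set (ι → α) := subcube w s ∩ germClass cofinite w

lemma subcube_mono (w : ι → α) : Monotone (subcube w) :=
  fun _ _ hst _ hx => hx.mono (compl_subset_compl.2 hst)

lemma isClosed_subcube [TopologicalSpace α] [T1Space α] (w : ι → α) (s : Set ι) :
    IsClosed (subcube w s) := by
  have hpi : subcube w s = sᶜ.pi fun i => {w i} := rfl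
  rw [hpi]
  exact isClosed_set_pi fun _ _ => isClosed_singleton

lemma countable_subcube [Countable α] (w : ι → α) {s : Set ι} (hs : s.Finite) :
    (subcube w s).Countable := by
  have := hs.to_subtype
  refine MapsTo.countable_of_injOn (mapsTo_univ s.domRestrict _) (fun x hx y hy hxy => ?_)
    countable_univ
  ext n
  by_cases hn : n ∈ s
  · exact congrFun hxy ⟨n, hn⟩
  · exact (hx hn).trans (hy hn).symm

lemma countable_germClass_cofinite [Countable ι] [Countable α] (w : ι → α) :
    (germClass cofinite w).Countable := by
  refine (countable_iUnion fun s : Finset ι => countable_subcube w s.finite_toSet).mono ?_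
  intro x hx
  have hfin : {n | x n ≠ w n}.Finite := hx
  exact mem_iUnion.2 ⟨hfin.toFinset, fun n hn => by simpa using hn⟩

lemma update_mem_finiteVariants [DecidableEq ι] {w x : ι → α} {s : Set ι} {n : ι} (hn : n ∈ s)
    (hx : x ∈ finiteVariants w s) (a : α) : Function.update x n a ∈ finiteVariants w s := by
  have hne {k : ι} (hk : k ≠ n) : Function.update x n a k = x k := Function.update_of_ne hk _ _
  have hgerm : Function.update x n a =ᶠ[cofinite] x :=
    (eventually_cofinite_ne n).mono fun _ => hne
  exact ⟨fun k hk => (hne (ne_of_mem_of_not_mem hn hk).symm).trans (hx.1 hk),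
    (mem_germClass_congr hgerm).2 hx.2⟩

lemma nhdsNE_neBot_finiteVariants [TopologicalSpace α] [Nontrivial α] {s : Set ι}
    (hs : s.Infinite) {w : ι → α} (x : finiteVariants w s) : (𝓝[≠] x).NeBot := by
  classical
  have : (cofinite : Filter s).NeBot := @cofinite_neBot _ hs.to_subtype
  choose flipValue hflipValue using fun a : α => exists_ne a
  let flipAt : s → finiteVariants w s := fun n =>
    ⟨Function.update x n (flipValue (x.1 n)), update_mem_finiteVariants n.2 x.2 _⟩
  have hflip : Tendsto flipAt cofinite (𝓝 x) := by
    rw [tendsto_subtype_rng, tendsto_pi_nhds]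
    intro k
    refine tendsto_const_nhds.congr' ?_
    filter_upwards [Subtype.val_injective.tendsto_cofinite.eventually (eventually_cofinite_ne k)]
      with n hn
    exact (Function.update_of_ne hn.symm _ _).symm
  have hne (n : s) : flipAt n ≠ x := fun h => hflipValue (x.1 n) <| by
    simpa [flipAt] using congrFun (congrArg Subtype.val h) n
  exact (tendsto_nhdsWithin_iff.2 ⟨hflip, .of_forall hne⟩).neBot

theorem not_baireSpace_finiteVariants [TopologicalSpace α] [T1Space α] [Countable α] [Nontrivial α]
    [Countable ι] {s : Set ι} (hs : s.Infinite) (w : ι → α) :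
    ¬ BaireSpace (finiteVariants w s) := by
  have : Countable (finiteVariants w s) :=
    ((countable_germClass_cofinite w).mono inter_subset_right).to_subtype
  have : Nonempty (finiteVariants w s) := ⟨⟨w, fun _ _ => rfl, self_mem_germClass _ _⟩⟩
  have := nhdsNE_neBot_finiteVariants hs (w := w)
  exact not_baireSpace_of_countable

lemma not_isGδ_of_subcube_inter_eq_finiteVariants [TopologicalSpace α] [CompactSpace α]
    [MetrizableSpace α] [Countable α] [Nontrivial α] [Countable ι] {s : Set ι} (hs : s.Infinite)
    {w : ι → α} {A : Set (ι → α)} (hA : subcube w s ∩ A = finiteVariants w s) : ¬ IsGδ A := by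
  intro hGδ
  refine not_baireSpace_finiteVariants hs w ?_
  rw [← hA]
  exact ((isClosed_subcube w s).isGδ.inter hGδ).baireSpace_of_t2Space_locallyCompactSpace

lemma not_isCompletelyMetrizableSpace_of_subcube_inter_eq_finiteVariants [TopologicalSpace α]
    [T1Space α] [Countable α] [Nontrivial α] [Countable ι] {s : Set ι} (hs : s.Infinite)
    {w : ι → α} {A : Set (ι → α)} (hA : subcube w s ∩ A = finiteVariants w s) :
    ¬ IsCompletelyMetrizableSpace A := by
  intro _
  refine not_baireSpace_finiteVariants hs w ?_
  rw [← hA]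
  have := isCompletelyMetrizableSpace_inter_of_isClosed (A := A) (isClosed_subcube w s)
  infer_instance

lemma exists_finset_forall_subcube_subset [TopologicalSpace α] {V : Set (ι → α)} (hV : IsOpen V)
    {u : ι → α} (hu : u ∈ V) :
    ∃ s : Finset ι, ∀ w, EqOn w u s → ∀ t : Set ι, subcube w (t \ s) ⊆ V := by
  obtain ⟨s, U, hU, hsV⟩ := isOpen_pi_iff.1 hV u hu
  refine ⟨s, fun w hw t x hx => hsV fun i hi => ?_⟩
  have hxu : x i = u i := (hx fun h => h.2 hi).trans (hw hi)
  exact hxu ▸ (hU i hi).2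

lemma exists_subcube_disjoint_of_countable [Nontrivial α] {B : Set (ι → α)} (hB : B.Countable)
    {s t : Set ι} (ht : t.Infinite) (hst : Disjoint s t) (v : ι → α) :
    ∃ w ∈ subcube v t, Disjoint (subcube w s) B := by
  have : Nonempty (ι → α) := ⟨v⟩
  obtain ⟨e, he⟩ := countable_iff_exists_subset_range.1 hB
  choose otherValue hother using fun a : α => exists_ne a
  have := ht.to_subtype
  let i : ℕ ↪ t := Infinite.natEmbedding t
  have hi : Function.Injective fun k => (i k : ι) := Subtype.val_injective.comp i.injective
  refine ⟨Function.extend (fun k => (i k : ι)) (fun k => otherValue (e k (i k))) v,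
    fun n hn => ?_, ?_⟩
  · exact Function.extend_apply' _ _ _ fun ⟨k, hk⟩ => hn (hk ▸ (i k).2)
  · refine disjoint_left.2 fun x hx hxB => ?_
    obtain ⟨k, rfl⟩ := he hxB
    have hk := hx (disjoint_right.1 hst (i k).2)
    rw [hi.extend_apply] at hk
    exact hother _ hk.symm

end Subcubes

section InfiniteOrAlmostAll

variable {ι : Type*} {I J : Set ι}

/-- The subsets of `ι`, as characteristic functions, that meet `I` in an infinite set or contain
all but finitely many elements of `J`; for suitable `I` and `J` in `ℕ` this is the semifilter
homeomorphic to van Mill's space. -/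
def infiniteOrAlmostAll (I J : Set ι) : Set (ι → Bool) :=
  (germClass (cofinite ⊓ 𝓟 I) fun _ => false)ᶜ ∪ germClass (cofinite ⊓ 𝓟 J) fun _ => true

lemma isSemifilter_infiniteOrAlmostAll (I : Set ℕ) {J : Set ℕ} (hJ : J.Infinite) :
    IsSemifilter (infiniteOrAlmostAll I J) := by
  have := hJ.cofinite_inf_principal_neBot
  refine ⟨?_, Or.inr (self_mem_germClass _ _), ?_, ?_⟩
  · rintro (h | h)
    · exact h (self_mem_germClass _ _)
    · exact disjoint_left.1 (disjoint_germClass_const Bool.false_ne_true) (self_mem_germClass _ _) h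
  · rintro x (hx | hx) y hxy
    · refine Or.inl fun hy => hx ?_
      filter_upwards [mem_germClass.1 hy] with n hn
      exact Bool.eq_false_of_not_eq_true fun hxn => by simp [hxy n hxn] at hn
    · exact Or.inr ((mem_germClass.1 hx).mono hxy)
  · intro x hx y hxy
    have hgerm : x =ᶠ[cofinite] y := hxy
    have hfalse := mem_germClass_congr (w := fun _ => false)
      (hgerm.filter_mono (inf_le_left : cofinite ⊓ 𝓟 I ≤ _))
    have htrue := mem_germClass_congr (w := fun _ => true)
      (hgerm.filter_mono (inf_le_left : cofinite ⊓ 𝓟 J ≤ _))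
    exact hx.imp (mt hfalse.2) htrue.1

lemma subcube_diff_infiniteOrAlmostAll {K : Set ι} {w : ι → Bool} (hIJ : Disjoint I J)
    (hJ : J.Infinite) (hK : K ⊆ I) (hwI : w =ᶠ[cofinite ⊓ 𝓟 I] fun _ => false)
    (hwJ : w =ᶠ[cofinite ⊓ 𝓟 J] fun _ => false) :
    subcube w K \ infiniteOrAlmostAll I J = finiteVariants w K := by
  have := hJ.cofinite_inf_principal_neBot
  ext x
  refine and_congr_right fun hx => ?_
  have hxJ : x =ᶠ[cofinite ⊓ 𝓟 J] w := eventuallyEq_cofinite_inf_principal_of_eqOn_diff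
    finite_empty (hx.mono fun n hn hnK => disjoint_left.1 hIJ (hK hnK) hn.1)
  have hxJ' : x ∉ germClass (cofinite ⊓ 𝓟 J) fun _ => true :=
    disjoint_left.1 (disjoint_germClass_const Bool.false_ne_true) (hxJ.trans hwJ)
  rw [infiniteOrAlmostAll, mem_union, or_iff_left hxJ', notMem_compl_iff, ← germClass_congr hwI]
  exact eventuallyEq_inf_principal_iff_of_eqOn_compl (subcube_mono w hK hx)

lemma subcube_inter_infiniteOrAlmostAll {K : Set ι} {w : ι → Bool} (hIJ : Disjoint I J)
    (hK : K ⊆ J) (hwI : w =ᶠ[cofinite ⊓ 𝓟 I] fun _ => false)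
    (hwJ : w =ᶠ[cofinite ⊓ 𝓟 J] fun _ => true) :
    subcube w K ∩ infiniteOrAlmostAll I J = finiteVariants w K := by
  ext x
  refine and_congr_right fun hx => ?_
  have hxI : x =ᶠ[cofinite ⊓ 𝓟 I] w := eventuallyEq_cofinite_inf_principal_of_eqOn_diff
    finite_empty (hx.mono fun n hn hnK => disjoint_left.1 hIJ hn.1 (hK hnK))
  have hxI' : x ∉ (germClass (cofinite ⊓ 𝓟 I) fun _ => false)ᶜ :=
    notMem_compl_iff.2 (hxI.trans hwI)
  rw [infiniteOrAlmostAll, mem_union, or_iff_right hxI', ← germClass_congr hwJ]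
  exact eventuallyEq_inf_principal_iff_of_eqOn_compl (subcube_mono w hK hx)

variable [Countable ι] {V : Set (ι → Bool)}

theorem not_isSigmaCompact_infiniteOrAlmostAll_inter (hI : I.Infinite) (hJ : J.Infinite)
    (hIJ : Disjoint I J) (hV : IsOpen V) (hVne : V.Nonempty) :
    ¬ IsSigmaCompact (infiniteOrAlmostAll I J ∩ V) := by
  classical
  intro hσ
  obtain ⟨u, hu⟩ := hVne
  obtain ⟨s, hs⟩ := exists_finset_forall_subcube_subset hV hu
  let w : ι → Bool := (s : Set ι).piecewise u fun _ => false
  have hwu : EqOn w u s := piecewise_eqOn _ _ _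
  have hw (t : Set ι) : w =ᶠ[cofinite ⊓ 𝓟 t] fun _ => false :=
    eventuallyEq_cofinite_inf_principal_of_eqOn_diff s.finite_toSet
      ((piecewise_eqOn_compl _ _ _).mono fun _ h => h.2)
  have hsubV : subcube w (I \ s) ⊆ V := hs w hwu I
  have htrace : subcube w (I \ s) ∩ (infiniteOrAlmostAll I J ∩ V)ᶜ = finiteVariants w (I \ s) := by
    rw [← subcube_diff_infiniteOrAlmostAll hIJ hJ sdiff_subset (hw I) (hw J)]
    grind
  exact not_isGδ_of_subcube_inter_eq_finiteVariants (hI.sdiff s.finite_toSet) htrace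
    (isGδ_compl_of_isSigmaCompact hσ)

theorem infiniteOrAlmostAll_inter_ne_union (hJ : J.Infinite) (hIJ : Disjoint I J)
    (hT : (I ∪ J)ᶜ.Infinite) (hV : IsOpen V) (hVne : V.Nonempty) {A B : Set (ι → Bool)}
    (hA : IsCompletelyMetrizableSpace A) (hB : B.Countable) :
    infiniteOrAlmostAll I J ∩ V ≠ A ∪ B := by
  classical
  intro hAB
  obtain ⟨u, hu⟩ := hVne
  obtain ⟨s, hs⟩ := exists_finset_forall_subcube_subset hV hu
  let v : ι → Bool := (s : Set ι).piecewise u fun n => decide (n ∈ J)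
  have hvs : EqOn v (fun n => decide (n ∈ J)) (sᶜ : Set ι) := piecewise_eqOn_compl _ _ _
  obtain ⟨w, hwv, hwB⟩ := exists_subcube_disjoint_of_countable hB (s := J \ s)
    (hT.sdiff s.finite_toSet) (disjoint_left.2 fun n hn hn' => hn'.1 (.inr hn.1)) v
  have hwu : EqOn w u s :=
    (hwv.mono fun _ hn h => h.2 hn).trans (piecewise_eqOn _ _ _)
  have hwI : w =ᶠ[cofinite ⊓ 𝓟 I] fun _ => false :=
    eventuallyEq_cofinite_inf_principal_of_eqOn_diff s.finite_toSet fun n hn =>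
      (hwv fun h => h.1 (.inl hn.1)).trans <|
        (hvs hn.2).trans (decide_eq_false (disjoint_left.1 hIJ hn.1))
  have hwJ : w =ᶠ[cofinite ⊓ 𝓟 J] fun _ => true :=
    eventuallyEq_cofinite_inf_principal_of_eqOn_diff s.finite_toSet fun n hn =>
      (hwv fun h => h.1 (.inr hn.1)).trans <| (hvs hn.2).trans (decide_eq_true hn.1)
  have hsubV : subcube w (J \ s) ⊆ V := hs w hwu J
  have htrace := calc subcube w (J \ s) ∩ A
    _ = subcube w (J \ s) ∩ (infiniteOrAlmostAll I J ∩ V) := by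
      rw [hAB, inter_union_distrib_left, hwB.inter_eq, union_empty]
    _ = subcube w (J \ s) ∩ infiniteOrAlmostAll I J := by
      rw [← inter_assoc, inter_right_comm, inter_eq_left.2 hsubV]
    _ = finiteVariants w (J \ s) :=
      subcube_inter_infiniteOrAlmostAll hIJ sdiff_subset hwI hwJ
  exact not_isCompletelyMetrizableSpace_of_subcube_inter_eq_finiteVariants
    (hJ.sdiff s.finite_toSet) htrace hA

end InfiniteOrAlmostAll

lemma infinite_setOf_mod_eq {d r : ℕ} (hr : r < d) : {n : ℕ | n % d = r}.Infinite :=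
  Nat.frequently_atTop_iff_infinite.1 (Nat.frequently_mod_eq hr)

/-- There is a semifilter homeomorphic to van Mill's space 𝐒. -/
theorem exists_semifilter_vanMill_S :
    ∃ S : Set Cantor, IsSemifilter S ∧
      (∃ A B : Set Cantor, S = A ∪ B ∧ CompletelyMetrizable A ∧ SigmaCompactSpace B) ∧
      (∀ U : Set Cantor, (∃ V : Set Cantor, IsOpen V ∧ U = S ∩ V) → U.Nonempty →
        ¬ SigmaCompactSpace U) ∧
      (∀ U : Set Cantor, (∃ V : Set Cantor, IsOpen V ∧ U = S ∩ V) → U.Nonempty →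
        ¬ ∃ A B : Set Cantor, U = A ∪ B ∧ CompletelyMetrizable A ∧ B.Countable) := by
  let I : Set ℕ := {n | n % 3 = 0}
  let J : Set ℕ := {n | n % 3 = 1}
  have hI : I.Infinite := infinite_setOf_mod_eq (by norm_num)
  have hJ : J.Infinite := infinite_setOf_mod_eq (by norm_num)
  have hIJ : Disjoint I J := disjoint_left.2 fun n (h₀ : n % 3 = 0) (h₁ : n % 3 = 1) => by omega
  have hT : (I ∪ J)ᶜ.Infinite := (infinite_setOf_mod_eq (d := 3) (r := 2) (by norm_num)).mono
    fun n (hn : n % 3 = 2) => by simp [I, J, hn]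
  have : (cofinite : Filter ℕ).IsCountablyGenerated := by
    rw [Nat.cofinite_eq_atTop]
    infer_instance
  refine ⟨infiniteOrAlmostAll I J, isSemifilter_infiniteOrAlmostAll I hJ, ⟨_, _, rfl, ?_, ?_⟩,
    ?_, ?_⟩
  · exact completelyMetrizable_iff.2 <| isCompletelyMetrizableSpace_of_isGδ <|
      isGδ_compl_of_isSigmaCompact <| isSigmaCompact_germClass _
  · exact isSigmaCompact_iff_sigmaCompactSpace.1 <| isSigmaCompact_germClass _
  · rintro _ ⟨V, hV, rfl⟩ hne
    rw [← isSigmaCompact_iff_sigmaCompactSpace]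
    exact not_isSigmaCompact_infiniteOrAlmostAll_inter hI hJ hIJ hV hne.right
  · rintro _ ⟨V, hV, rfl⟩ hne ⟨A, B, hAB, hA, hB⟩
    exact infiniteOrAlmostAll_inter_ne_union hJ hIJ hT hV hne.right
      (completelyMetrizable_iff.1 hA) hB hAB
end

section
/- Let S be a semifilter on ω. Then the product space ℚ × S, where ℚ is the space of rational numbers and S carries the subspace topology from the Cantor space 2^ω, is homeomorphic to a semifilter on ω. -/
open Set

/-!
The cofinite subsets of `ω` form a semifilter homeomorphic to `ℚ`, and two semifilters placed on the
even and the odd numbers give a semifilter homeomorphic to their product.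

For the first point, transposing coordinates shows that all classes of `2 ^ ω` modulo finite
modification are homeomorphic, so the cofinite sets may be replaced by the class of an alternating
sequence. A member of that class takes each value infinitely often, so changing a late coordinate
approximates it lexicographically from both sides. This makes the lexicographic order on the class
dense without endpoints, hence isomorphic to `ℚ` by Cantor's theorem, and also makes its order
topology agree with the product topology.
-/

open Filter PiNat Topology

section Lex

variable {E : ℕ → Type*} [∀ n, LinearOrder (E n)]

/-- A set of sequences each of whose points is a two-sided lexicographic limit of the set: every
prefix of a point is shared with a smaller and with a larger element. -/
def LexTwoSided (A : Set (∀ n, E n)) : Prop :=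
  ∀ x ∈ A, ∀ n, (∃ y ∈ A, toLex y < toLex x ∧ y ∈ cylinder x n) ∧
    ∃ y ∈ A, toLex x < toLex y ∧ y ∈ cylinder x n

theorem ordConnected_preimage_cylinder (x : ∀ n, E n) (n : ℕ) :
    (ofLex ⁻¹' cylinder x n).OrdConnected := by
  refine ⟨fun y hy z hz w hw i => ?_⟩
  induction i using Nat.strong_induction_on with
  | _ i ih =>
    intro hi
    have prefix_eq (j : ℕ) (hj : j < i) : ofLex w j = x j := ih j hj (hj.trans hi)
    have lower : ofLex y i ≤ ofLex w i := Pi.apply_le_of_toLex hw.1 fun j hj =>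
      (hy j (hj.trans hi)).trans (prefix_eq j hj).symm
    have upper : ofLex w i ≤ ofLex z i := Pi.apply_le_of_toLex hw.2 fun j hj =>
      (prefix_eq j hj).trans (hz j (hj.trans hi)).symm
    exact le_antisymm (upper.trans_eq (hz i hi)) ((hy i hi).symm.trans_le lower)

theorem exists_forall_mem_cylinder_lt {x y : Lex (∀ n, E n)} (hxy : x < y) :
    ∃ n, ∀ x' y' : Lex (∀ n, E n), ofLex x' ∈ cylinder (ofLex x) n →
      ofLex y' ∈ cylinder (ofLex y) n → x' < y' := by
  obtain ⟨i, heq, hlt⟩ := hxy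
  refine ⟨i + 1, fun x' y' hx' hy' => ⟨i, fun j hj => ?_, ?_⟩⟩
  · exact ((hx' j (by omega)).trans (heq j hj)).trans (hy' j (by omega)).symm
  · exact (hx' i i.lt_succ_self).trans_lt (hlt.trans_eq (hy' i i.lt_succ_self).symm)

variable {A : Set (∀ n, E n)}

theorem LexTwoSided.denselyOrdered (hA : LexTwoSided A) : DenselyOrdered (ofLex ⁻¹' A) := by
  refine ⟨fun x y hxy => ?_⟩
  obtain ⟨n, hn⟩ := exists_forall_mem_cylinder_lt (Subtype.coe_lt_coe.2 hxy)
  obtain ⟨z, hzA, hzy, hz⟩ := (hA _ y.2 n).1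
  exact ⟨⟨toLex z, hzA⟩, hn x (toLex z) (self_mem_cylinder _ n) hz, hzy⟩

theorem LexTwoSided.noMinOrder (hA : LexTwoSided A) : NoMinOrder (ofLex ⁻¹' A) :=
  ⟨fun x => let ⟨y, hyA, hyx, _⟩ := (hA _ x.2 0).1; ⟨⟨toLex y, hyA⟩, hyx⟩⟩

theorem LexTwoSided.noMaxOrder (hA : LexTwoSided A) : NoMaxOrder (ofLex ⁻¹' A) :=
  ⟨fun x => let ⟨y, hyA, hxy, _⟩ := (hA _ x.2 0).2; ⟨⟨toLex y, hyA⟩, hxy⟩⟩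

variable [∀ n, TopologicalSpace (E n)]

/-- The product topology, not the order topology: subsets have to keep their topology as sets of
sequences. -/
local instance : TopologicalSpace (Lex (∀ n, E n)) := inferInstanceAs (TopologicalSpace (∀ n, E n))

variable [∀ n, DiscreteTopology (E n)]

local instance : OrderClosedTopology (Lex (∀ n, E n)) where
  isClosed_le' := by
    rw [← isOpen_compl_iff, isOpen_iff_mem_nhds]
    rintro ⟨x, y⟩ (hxy : ¬x ≤ y)
    obtain ⟨n, hn⟩ := exists_forall_mem_cylinder_lt (not_le.1 hxy)
    have hx : cylinder (ofLex x) n ∈ 𝓝 x := (isOpen_cylinder E _ n).mem_nhds (self_mem_cylinder _ n)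
    have hy : cylinder (ofLex y) n ∈ 𝓝 y := (isOpen_cylinder E _ n).mem_nhds (self_mem_cylinder _ n)
    filter_upwards [prod_mem_nhds hx hy] with p hp
    exact not_le.2 (hn p.2 p.1 hp.2 hp.1)

theorem LexTwoSided.exists_Ioo_subset_of_mem_nhds (hA : LexTwoSided A) {x : ofLex ⁻¹' A}
    {U : Set (ofLex ⁻¹' A)} (hU : U ∈ 𝓝 x) : ∃ a b, x ∈ Ioo a b ∧ Ioo a b ⊆ U := by
  obtain ⟨V, hV, hVU⟩ := mem_nhds_subtype _ x U |>.1 hU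
  obtain ⟨_, ⟨z, n, rfl⟩, hxz, hzV⟩ := (isTopologicalBasis_cylinders E).mem_nhds_iff.1 hV
  obtain ⟨⟨a, haA, hax, ha⟩, b, hbA, hxb, hb⟩ := hA _ x.2 n
  refine ⟨⟨toLex a, haA⟩, ⟨toLex b, hbA⟩, ⟨hax, hxb⟩, fun w hw => hVU (hzV ?_)⟩
  rw [← mem_cylinder_iff_eq.1 hxz]
  exact (ordConnected_preimage_cylinder _ n).out ha hb ⟨hw.1.le, hw.2.le⟩

theorem LexTwoSided.orderTopology (hA : LexTwoSided A) : OrderTopology (ofLex ⁻¹' A) := by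
  refine ⟨le_antisymm (le_generateFrom ?_) (le_of_nhds_le_nhds fun x U hU => ?_)⟩
  · rintro _ ⟨x, rfl | rfl⟩
    exacts [isOpen_Ioi, isOpen_Iio]
  · obtain ⟨a, b, hx, hab⟩ := hA.exists_Ioo_subset_of_mem_nhds hU
    let := Preorder.topology (ofLex ⁻¹' A)
    have : OrderTopology (ofLex ⁻¹' A) := ⟨rfl⟩
    exact mem_of_superset (Ioo_mem_nhds hx.1 hx.2) hab

theorem LexTwoSided.nonempty_rat_homeomorph (hA : LexTwoSided A) (hcount : A.Countable)
    (hne : A.Nonempty) : Nonempty (ℚ ≃ₜ A) := by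
  have := hA.denselyOrdered
  have := hA.noMinOrder
  have := hA.noMaxOrder
  have := hA.orderTopology
  have : Countable (ofLex ⁻¹' A) := hcount.to_subtype
  have : Nonempty (ofLex ⁻¹' A) := hne.to_subtype
  exact (Order.iso_of_countable_dense ℚ (ofLex ⁻¹' A)).map fun e => e.toHomeomorph

end Lex

section FinModClass

variable {ι : Type*} {E : ι → Type*}

/-- The class of `p` modulo finite modifications. -/
def finModClass (p : ∀ i, E i) : Set (∀ i, E i) := {x | ∀ᶠ i in cofinite, x i = p i}

theorem mem_finModClass {p x : ∀ i, E i} : x ∈ finModClass p ↔ ∀ᶠ i in cofinite, x i = p i :=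
  Iff.rfl

theorem self_mem_finModClass (p : ∀ i, E i) : p ∈ finModClass p :=
  mem_finModClass.2 <| .of_forall fun _ => rfl

theorem update_mem_finModClass [DecidableEq ι] {p x : ∀ i, E i} (hx : x ∈ finModClass p) (i : ι)
    (a : E i) : Function.update x i a ∈ finModClass p := by
  filter_upwards [hx, (finite_singleton i).compl_mem_cofinite] with j hj hji
  rwa [Function.update_of_ne hji]

theorem countable_finModClass [Countable ι] [∀ i, Countable (E i)] (p : ∀ i, E i) :
    (finModClass p).Countable := by
  classical
  let modify (f : Σ s : Finset ι, ∀ i : s, E i) (i : ι) : E i :=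
    if hi : i ∈ f.1 then f.2 ⟨i, hi⟩ else p i
  refine (countable_range modify).mono fun x hx => ?_
  refine ⟨⟨(eventually_cofinite.1 hx).toFinset, fun i => x i⟩, funext fun i => ?_⟩
  by_cases hi : x i = p i <;> simp [modify, hi]

/-- The homeomorphism between two classes modulo finite modifications that transposes `p i` and
`q i` in each coordinate `i`. -/
def finModClassHomeomorph [∀ i, DecidableEq (E i)] [∀ i, TopologicalSpace (E i)]
    [∀ i, DiscreteTopology (E i)] (p q : ∀ i, E i) : finModClass p ≃ₜ finModClass q :=
  (Homeomorph.piCongrRight fun i => (Equiv.swap (p i) (q i)).toHomeomorphOfDiscrete).subtype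
    fun x => by
      change (∀ᶠ i in cofinite, x i = p i) ↔ ∀ᶠ i in cofinite, Equiv.swap (p i) (q i) (x i) = q i
      simp only [Equiv.swap_apply_eq_iff, Equiv.swap_apply_right]

end FinModClass

section Sequences

variable {E : ℕ → Type*}

theorem lexTwoSided_finModClass [∀ n, LinearOrder (E n)] {p : ∀ n, E n}
    (hmin : ∃ᶠ n in atTop, ¬IsMin (p n)) (hmax : ∃ᶠ n in atTop, ¬IsMax (p n)) :
    LexTwoSided (finModClass p) := by
  intro x hx n
  have hxp : ∀ᶠ m in atTop, n ≤ m ∧ x m = p m :=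
    (eventually_ge_atTop n).and (Nat.cofinite_eq_atTop ▸ hx)
  constructor
  · obtain ⟨m, hm, hnm, hxm⟩ := (hmin.and_eventually hxp).exists
    obtain ⟨a, ha⟩ := not_isMin_iff.1 hm
    exact ⟨Function.update x m a, update_mem_finModClass hx m a,
      Pi.toLex_update_lt_self_iff.2 (ha.trans_eq hxm.symm),
      cylinder_anti _ hnm (update_mem_cylinder _ m a)⟩
  · obtain ⟨m, hm, hnm, hxm⟩ := (hmax.and_eventually hxp).exists
    obtain ⟨a, ha⟩ := not_isMax_iff.1 hm
    exact ⟨Function.update x m a, update_mem_finModClass hx m a,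
      Pi.lt_toLex_update_self_iff.2 (hxm.trans_lt ha),
      cylinder_anti _ hnm (update_mem_cylinder _ m a)⟩

theorem nonempty_rat_homeomorph_finModClass [∀ n, TopologicalSpace (E n)]
    [∀ n, DiscreteTopology (E n)] [∀ n, Countable (E n)] [∀ n, Nontrivial (E n)] (p : ∀ n, E n) :
    Nonempty (ℚ ≃ₜ finModClass p) := by
  classical
  choose f hf using fun n => Countable.exists_injective_nat (E n)
  let _ (n : ℕ) : LinearOrder (E n) := LinearOrder.lift' (f n) (hf n)
  choose a b hab using fun n => exists_pair_lt (E n)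
  let q (n : ℕ) : E n := if Even n then b n else a n
  have hmin : ∃ᶠ n in atTop, ¬IsMin (q n) := Nat.frequently_even.mono fun n hn =>
    not_isMin_iff.2 ⟨a n, by simpa only [q, if_pos hn] using hab n⟩
  have hmax : ∃ᶠ n in atTop, ¬IsMax (q n) := Nat.frequently_odd.mono fun n hn =>
    not_isMax_iff.2 ⟨b n, by simpa only [q, if_neg (Nat.not_even_iff_odd.2 hn)] using hab n⟩
  exact ((lexTwoSided_finModClass hmin hmax).nonempty_rat_homeomorph (countable_finModClass q)
    ⟨q, self_mem_finModClass q⟩).map fun e => e.trans (finModClassHomeomorph q p)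

end Sequences

theorem isSemifilter_finModClass_true : IsSemifilter (finModClass fun _ => true) := by
  refine ⟨fun h => ?_, self_mem_finModClass _, fun x hx y hxy => ?_, fun x hx y hxy => ?_⟩
  · simpa using (mem_finModClass.1 h).exists
  · exact (mem_finModClass.1 hx).mono hxy
  · filter_upwards [hx, eventually_cofinite.2 hxy] with n hxn hxyn
    exact hxyn.symm.trans hxn

/-- The product of two collections of subsets of `ω`, realised on `ω` itself: sets whose even half
lies in `C` and whose odd half lies in `S`. -/
def semifilterProd (C S : Set Cantor) : Set Cantor :=
  {x | (fun n => x (2 * n)) ∈ C ∧ (fun n => x (2 * n + 1)) ∈ S}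

theorem IsSemifilter.semifilterProd {C S : Set Cantor} (hC : IsSemifilter C) (hS : IsSemifilter S) :
    IsSemifilter (semifilterProd C S) := by
  obtain ⟨hC_empty, hC_univ, hC_upward, hC_finMod⟩ := hC
  obtain ⟨-, hS_univ, hS_upward, hS_finMod⟩ := hS
  refine ⟨fun h => hC_empty h.1, ⟨hC_univ, hS_univ⟩, fun x hx y hxy => ?_, fun x hx y hxy => ?_⟩
  · exact ⟨hC_upward _ hx.1 _ fun n => hxy (2 * n), hS_upward _ hx.2 _ fun n => hxy (2 * n + 1)⟩
  · have even_injective : Function.Injective fun n : ℕ => 2 * n := fun m n h => by simpa using h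
    have odd_injective : Function.Injective fun n : ℕ => 2 * n + 1 := fun m n h => by simpa using h
    exact ⟨hC_finMod _ hx.1 _ (hxy.preimage even_injective.injOn),
      hS_finMod _ hx.2 _ (hxy.preimage odd_injective.injOn)⟩

/-- Split a subset of `ω` into its even and its odd half. -/
def evenOddHomeomorph : Cantor ≃ₜ Cantor × Cantor :=
  (Homeomorph.piCongrLeft (Y := fun _ => Bool) Equiv.natSumNatEquivNat).symm.trans
    Homeomorph.sumArrowHomeomorphProdArrow

/-- Identify a pair of subsets of `ω` with the set having them as its even and odd halves. -/
def semifilterProdHomeomorph (C S : Set Cantor) : C × S ≃ₜ semifilterProd C S :=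
  ((evenOddHomeomorph.subtype (q := (· ∈ C ×ˢ S)) fun _ => Iff.rfl).trans
    (Homeomorph.Set.prod C S)).symm

/-- ℚ × S is homeomorphic to a semifilter, for any semifilter S. -/
theorem rat_prod_semifilter_homeomorphic_semifilter (S : Set Cantor) (hS : IsSemifilter S) :
    ∃ T : Set Cantor, IsSemifilter T ∧ Nonempty ((ℚ × S) ≃ₜ T) := by
  obtain ⟨e⟩ := nonempty_rat_homeomorph_finModClass (E := fun _ => Bool) fun _ => true
  exact ⟨semifilterProd (finModClass fun _ => true) S,
    isSemifilter_finModClass_true.semifilterProd hS,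
    ⟨(e.prodCongr (Homeomorph.refl S)).trans (semifilterProdHomeomorph _ S)⟩⟩
end
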